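/- arXiv:1003.5368 — 2 statements merged into one kernel-verified Lean document; each statement's English description precedes it below -/
import Mathlib

section
/- (Split decomposition) For 0 ≤ i ≤ d set U_i = τ_i(A)E*_rW, with U_{−1} = 0 and U_{d+1} = 0. Then: (i) each U_i is one-dimensional and W = U_0 ⊕ U_1 ⊕ ··· ⊕ U_d (direct sum); (ii) U_i = (Σ_{h=0}^i E*_{r+h}W) ∩ (Σ_{h=i}^d E_{t+h}W) for 0 ≤ i ≤ d; (iii) (A − θ_{t+i}I)U_i = U_{i+1} and (A* − θ*_{r+i}I)U_i = U_{i−1} for 0 ≤ i ≤ d. -/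
open Matrix
open scoped Classical

noncomputable section

/-- The full setup: a `Q`-polynomial distance-regular graph `Γ = (X,R)` of diameter `D ≥ 3`,
with adjacency matrix `A`, primitive idempotents `E_i`, eigenvalues `θ_i`,
Krein parameters `q^h_{ij}`, a fixed base vertex `x`, dual primitive idempotents `E*_i`,
dual adjacency matrix `A*` and dual eigenvalues `θ*_i`. -/
structure TSetup (X : Type*) [Fintype X] [DecidableEq X] where
  G : SimpleGraph X
  hGconn : G.Connected
  D : ℕ
  hD3 : 3 ≤ D
  hDiamLe : ∀ y z : X, G.dist y z ≤ D
  hDiamEq : ∃ y z : X, G.dist y z = D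
  p : ℕ → ℕ → ℕ → ℕ
  hDRG : ∀ h i j : ℕ, h ≤ D → i ≤ D → j ≤ D → ∀ y z : X, G.dist y z = h →
    Nat.card {w : X // G.dist y w = i ∧ G.dist z w = j} = p h i j
  A : Matrix X X ℂ
  hA : ∀ y z : X, A y z = if G.Adj y z then 1 else 0
  E : ℕ → Matrix X X ℂ
  hEzero : ∀ i : ℕ, D < i → E i = 0
  hEsum : ∑ i ∈ Finset.range (D + 1), E i = 1
  hEidem : ∀ i j : ℕ, i ≤ D → j ≤ D → E i * E j = if i = j then E i else 0
  hEsymm : ∀ i : ℕ, (E i)ᵀ = E i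
  hEreal : ∀ i : ℕ, (E i).map (starRingEnd ℂ) = E i
  hE0 : E 0 = (Fintype.card X : ℂ)⁻¹ • Matrix.of (fun _ _ => (1 : ℂ))
  θ : ℕ → ℝ
  hθinj : ∀ i j : ℕ, i ≤ D → j ≤ D → θ i = θ j → i = j
  hAspec : A = ∑ i ∈ Finset.range (D + 1), (θ i : ℂ) • E i
  q : ℕ → ℕ → ℕ → ℝ
  hKrein : ∀ i j : ℕ, i ≤ D → j ≤ D →
    Matrix.hadamard (E i) (E j) =
      (Fintype.card X : ℂ)⁻¹ • ∑ h ∈ Finset.range (D + 1), (q h i j : ℂ) • E h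
  hQpoly0 : ∀ h i j : ℕ, h ≤ D → i ≤ D → j ≤ D →
    (i + j < h ∨ h + j < i ∨ h + i < j) → q h i j = 0
  hQpoly1 : ∀ h i j : ℕ, h ≤ D → i ≤ D → j ≤ D →
    (h = i + j ∨ i = h + j ∨ j = h + i) → q h i j ≠ 0
  x : X
  Estar : ℕ → Matrix X X ℂ
  hEstarzero : ∀ i : ℕ, D < i → Estar i = 0
  hEstar : ∀ i : ℕ, i ≤ D → ∀ y z : X,
    Estar i y z = if y = z ∧ G.dist x y = i then 1 else 0
  Astar : Matrix X X ℂ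
  hAstar : ∀ y z : X, Astar y z = if y = z then (Fintype.card X : ℂ) * E 1 x y else 0
  θstar : ℕ → ℝ
  hθstarinj : ∀ i j : ℕ, i ≤ D → j ≤ D → θstar i = θstar j → i = j
  hAstarspec : Astar = ∑ i ∈ Finset.range (D + 1), (θstar i : ℂ) • Estar i

variable {X : Type*} [Fintype X] [DecidableEq X]

/-- The Terwilliger algebra `T = T(x)`, generated by `A` and `A*`. -/
def TSetup.T (S : TSetup X) : Subalgebra ℂ (Matrix X X ℂ) :=
  Algebra.adjoin ℂ {S.A, S.Astar}

/-- A thin irreducible `T`-module `W` with endpoint `r`, dual endpoint `t` and diameter `d`,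
where `E*_i W ≠ 0` iff `r ≤ i ≤ r + d` and `E_i W ≠ 0` iff `t ≤ i ≤ t + d`. -/
structure TMod (S : TSetup X) where
  W : Submodule ℂ (X → ℂ)
  hWinv : ∀ B ∈ S.T, ∀ w ∈ W, B *ᵥ w ∈ W
  hWne : W ≠ ⊥
  hWirr : ∀ U : Submodule ℂ (X → ℂ), U ≤ W →
    (∀ B ∈ S.T, ∀ w ∈ U, B *ᵥ w ∈ U) → U = ⊥ ∨ U = W
  hthin : ∀ i : ℕ, Module.finrank ℂ (W.map (S.Estar i).mulVecLin) ≤ 1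
  r : ℕ
  t : ℕ
  d : ℕ
  hr : ∀ i : ℕ, W.map (S.Estar i).mulVecLin ≠ ⊥ ↔ r ≤ i ∧ i ≤ r + d
  ht : ∀ i : ℕ, W.map (S.E i).mulVecLin ≠ ⊥ ↔ t ≤ i ∧ i ≤ t + d

open Classical in
/-- The action of a matrix `B` on `W` (the restriction of `B` to `W`; defined to be `0`
if `B` does not leave `W` invariant). -/
def actW (S : TSetup X) (M : TMod S) (B : Matrix X X ℂ) : M.W →ₗ[ℂ] M.W :=
  if h : ∀ w ∈ M.W, B.mulVecLin w ∈ M.W then B.mulVecLin.restrict h else 0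

/-- `tr_W(B)`: the trace of the action of `B` on `W`. -/
def trW (S : TSetup X) (M : TMod S) (B : Matrix X X ℂ) : ℂ :=
  LinearMap.trace ℂ M.W (actW S M B)

/-- `a_i(W) = tr_W(E*_{r+i} A)`. -/
def aW (S : TSetup X) (M : TMod S) (i : ℕ) : ℂ :=
  trW S M (S.Estar (M.r + i) * S.A)

/-- `x_i(W) = tr_W(E*_{r+i} A E*_{r+i-1} A)`, with `x_0(W) = 0`. -/
def xW (S : TSetup X) (M : TMod S) (i : ℕ) : ℂ :=
  if i = 0 then 0 else trW S M (S.Estar (M.r + i) * S.A * S.Estar (M.r + i - 1) * S.A)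

/-- `a*_i(W) = tr_W(E_{t+i} A*)`. -/
def astarW (S : TSetup X) (M : TMod S) (i : ℕ) : ℂ :=
  trW S M (S.E (M.t + i) * S.Astar)

/-- `x*_i(W) = tr_W(E_{t+i} A* E_{t+i-1} A*)`, with `x*_0(W) = 0`. -/
def xstarW (S : TSetup X) (M : TMod S) (i : ℕ) : ℂ :=
  if i = 0 then 0 else trW S M (S.E (M.t + i) * S.Astar * S.E (M.t + i - 1) * S.Astar)

/-- The polynomials `p_i`: `p_0 = 1`, `p_{-1} = 0`,
`λ p_i = p_{i+1} + a_i(W) p_i + x_i(W) p_{i-1}`. -/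
def pW (S : TSetup X) (M : TMod S) : ℕ → Polynomial ℂ
  | 0 => 1
  | 1 => Polynomial.X - Polynomial.C (aW S M 0)
  | (n + 2) =>
      (Polynomial.X - Polynomial.C (aW S M (n + 1))) * pW S M (n + 1)
        - Polynomial.C (xW S M (n + 1)) * pW S M n

/-- The polynomials `p*_i`: `p*_0 = 1`, `p*_{-1} = 0`,
`λ p*_i = p*_{i+1} + a*_i(W) p*_i + x*_i(W) p*_{i-1}`. -/
def pstarW (S : TSetup X) (M : TMod S) : ℕ → Polynomial ℂ
  | 0 => 1
  | 1 => Polynomial.X - Polynomial.C (astarW S M 0)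
  | (n + 2) =>
      (Polynomial.X - Polynomial.C (astarW S M (n + 1))) * pstarW S M (n + 1)
        - Polynomial.C (xstarW S M (n + 1)) * pstarW S M n

/-- The Hermitian inner product `⟨u,v⟩ = Σ_y u_y conj(v_y)` on `ℂ^X`. -/
def herm (u v : X → ℂ) : ℂ := ∑ y, u y * (starRingEnd ℂ) (v y)

/-- `ν(W)`, the multiplicative inverse of `m_0(W) = tr_W(E_t E*_r)`. -/
def nuW (S : TSetup X) (M : TMod S) : ℂ :=
  (trW S M (S.E M.t * S.Estar M.r))⁻¹

/-- `k_i(W) = ν(W) m*_i(W)` where `m*_i(W) = tr_W(E*_{r+i} E_t)`. -/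
def kW (S : TSetup X) (M : TMod S) (i : ℕ) : ℂ :=
  nuW S M * trW S M (S.Estar (M.r + i) * S.E M.t)

/-- `k*_i(W) = ν(W) m_i(W)` where `m_i(W) = tr_W(E_{t+i} E*_r)`. -/
def kstarW (S : TSetup X) (M : TMod S) (i : ℕ) : ℂ :=
  nuW S M * trW S M (S.E (M.t + i) * S.Estar M.r)

structure SplitData {K V : Type*} [Field K] [AddCommGroup V] [Module K V]
    (W : Submodule K V) (A As : V →ₗ[K] V) (e es : ℕ → V →ₗ[K] V) (th ths : ℕ → K)
    (d : ℕ) (u : ℕ → V) : Prop where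
  invA : ∀ w ∈ W, A w ∈ W
  invAs : ∀ w ∈ W, As w ∈ W
  eA : ∀ i, ∀ w ∈ W, e i (A w) = th i • e i w
  esAs : ∀ i, ∀ w ∈ W, es i (As w) = ths i • es i w
  tri : ∀ i, ∀ w ∈ W, (∀ h, i < h → es h w = 0) → ∀ h, i + 1 < h → es h (A w) = 0
  tris : ∀ j, ∀ w ∈ W, (∀ h, h < j → e h w = 0) → ∀ h, h + 1 < j → e h (As w) = 0
  sep : ∀ w ∈ W, (∀ i, e i w = 0) → w = 0
  seps : ∀ w ∈ W, (∀ i, es i w = 0) → w = 0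
  ehi : ∀ i, d < i → ∀ w ∈ W, e i w = 0
  ne : ∀ i, i ≤ d → ∃ w ∈ W, e i w ≠ 0
  nes : ∀ i, i ≤ d → ∃ w ∈ W, es i w ≠ 0
  thin : ∀ i, ∃ z, ∀ w ∈ W, ∃ c : K, es i w = c • z
  irr : ∀ N : Submodule K V, N ≤ W → (∀ w ∈ N, A w ∈ N) → (∀ w ∈ N, As w ∈ N) → N = ⊥ ∨ N = W
  u0W : u 0 ∈ W
  u0ne : u 0 ≠ 0
  u0 : ∀ h, 0 < h → es h (u 0) = 0
  us : ∀ i, u (i + 1) = A (u i) - th i • u i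

namespace SplitData

section
variable {K V : Type*} [Field K] [AddCommGroup V] [Module K V]

/-- Vectors of `W` killed by `f h` for all `h` satisfying `p`. -/
def kil (W : Submodule K V) (f : ℕ → V →ₗ[K] V) (p : ℕ → Prop) : Submodule K V where
  carrier := {w | w ∈ W ∧ ∀ h, p h → f h w = 0}
  zero_mem' := ⟨W.zero_mem, fun h _ => map_zero _⟩
  add_mem' := by
    rintro a b ⟨ha, ha'⟩ ⟨hb, hb'⟩
    exact ⟨W.add_mem ha hb, fun h hh => by rw [map_add, ha' h hh, hb' h hh, add_zero]⟩
  smul_mem' := by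
    rintro c a ⟨ha, ha'⟩
    exact ⟨W.smul_mem c ha, fun h hh => by rw [map_smul, ha' h hh, smul_zero]⟩

theorem mem_kil {W : Submodule K V} {f : ℕ → V →ₗ[K] V} {p : ℕ → Prop} {w : V} :
    w ∈ kil W f p ↔ w ∈ W ∧ ∀ h, p h → f h w = 0 := Iff.rfl

variable {W : Submodule K V} {A As : V →ₗ[K] V} {e es : ℕ → V →ₗ[K] V} {th ths : ℕ → K}
    {d : ℕ} {u : ℕ → V}

theorem stepA_P (H : SplitData W A As e es th ths d u) {i : ℕ} {w : V} (c : K)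
    (hw : w ∈ kil W es (i < ·)) : A w - c • w ∈ kil W es (i + 1 < ·) := by
  refine ⟨W.sub_mem (H.invA _ hw.1) (W.smul_mem _ hw.1), fun h hh => ?_⟩
  rw [map_sub, map_smul, H.tri i w hw.1 hw.2 h hh, hw.2 h (by omega), smul_zero, sub_zero]

theorem stepA_Q (H : SplitData W A As e es th ths d u) {j : ℕ} {w : V}
    (hw : w ∈ kil W e (· < j)) : A w - th j • w ∈ kil W e (· < j + 1) := by
  refine ⟨W.sub_mem (H.invA _ hw.1) (W.smul_mem _ hw.1), fun h hh => ?_⟩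
  rw [map_sub, map_smul, H.eA h w hw.1]
  rcases Nat.lt_succ_iff_lt_or_eq.1 hh with h1 | h1
  · rw [hw.2 h h1]; simp
  · subst h1; simp

theorem stepAs_P (H : SplitData W A As e es th ths d u) {i : ℕ} {w : V}
    (hw : w ∈ kil W es (i < ·)) : As w - ths i • w ∈ kil W es (i ≤ ·) := by
  refine ⟨W.sub_mem (H.invAs _ hw.1) (W.smul_mem _ hw.1), fun h hh => ?_⟩
  rw [map_sub, map_smul, H.esAs h w hw.1]
  rcases Nat.eq_or_lt_of_le hh with h1 | h1
  · subst h1; simp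
  · rw [hw.2 h h1]; simp

theorem stepAs_Q (H : SplitData W A As e es th ths d u) {j : ℕ} {w : V} (c : K)
    (hw : w ∈ kil W e (· < j + 1)) : As w - c • w ∈ kil W e (· < j) := by
  refine ⟨W.sub_mem (H.invAs _ hw.1) (W.smul_mem _ hw.1), fun h hh => ?_⟩
  rw [map_sub, map_smul, H.tris _ w hw.1 hw.2 h (by omega), hw.2 h (by omega), smul_zero, sub_zero]

theorem stepAs_0 (H : SplitData W A As e es th ths d u) {w : V}
    (hw : w ∈ kil W es (0 < ·)) : As w = ths 0 • w := by
  have := H.stepAs_P hw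
  exact sub_eq_zero.1 (H.seps _ this.1 fun i => this.2 i (Nat.zero_le _))

theorem vanish (H : SplitData W A As e es th ths d u) (i : ℕ) (w : V)
    (h1 : w ∈ kil W es (i < ·)) (h2 : w ∈ kil W e (· < i + 1)) : w = 0 := by
  set N : Submodule K V := ⨆ i : ℕ, kil W es (i < ·) ⊓ kil W e (· < i + 1) with hN
  have hle : N ≤ kil W e (· < 1) := iSup_le fun i x hx => ⟨hx.2.1, fun h hh => hx.2.2 h (by omega)⟩
  have hmem : ∀ i x, x ∈ kil W es (i < ·) → x ∈ kil W e (· < i + 1) → x ∈ N := fun i x a b =>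
    (le_iSup (fun i : ℕ => kil W es (i < ·) ⊓ kil W e (· < i + 1)) i) ⟨a, b⟩
  have hA : N ≤ N.comap A := by
    refine iSup_le fun i x hx => ?_
    have := hmem (i+1) _ (H.stepA_P (th (i+1)) hx.1) (H.stepA_Q hx.2)
    have h3 := N.add_mem this (N.smul_mem (th (i+1)) (hmem i x hx.1 hx.2))
    simpa using h3
  have hAs : N ≤ N.comap As := by
    refine iSup_le fun i x hx => ?_
    have h4 := hmem i x hx.1 hx.2
    rcases i with _ | i
    · simpa [H.stepAs_0 hx.1] using N.smul_mem _ h4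
    · have := hmem i _ (H.stepAs_P hx.1) (H.stepAs_Q (ths (i+1)) hx.2)
      have h3 := N.add_mem this (N.smul_mem (ths (i+1)) h4)
      simpa using h3
  rcases H.irr N (fun x hx => (hle hx).1) hA hAs with h | h
  · simpa [h] using hmem i w h1 h2
  · obtain ⟨y, hy, hy'⟩ := H.ne 0 (Nat.zero_le _)
    rw [← h] at hy
    exact absurd ((hle hy).2 0 (by omega)) hy'

theorem uP (H : SplitData W A As e es th ths d u) (i : ℕ) : u i ∈ kil W es (i < ·) := by
  induction i with
  | zero => exact ⟨H.u0W, H.u0⟩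
  | succ i ih => rw [H.us]; exact H.stepA_P _ ih

theorem uQ (H : SplitData W A As e es th ths d u) (i : ℕ) : u i ∈ kil W e (· < i) := by
  induction i with
  | zero => exact ⟨H.u0W, fun h hh => absurd hh (by omega)⟩
  | succ i ih => rw [H.us]; exact H.stepA_Q ih

theorem utop (H : SplitData W A As e es th ths d u) : u (d + 1) = 0 := by
  refine H.sep _ (H.uP _).1 fun i => ?_
  by_cases h : i < d + 1
  · exact (H.uQ (d+1)).2 i h
  · exact H.ehi i (by omega) _ (H.uP _).1

/-- one-dimensionality of the intersection -/
theorem line (H : SplitData W A As e es th ths d u) {i : ℕ} (hi : u i ≠ 0) {w : V}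
    (h1 : w ∈ kil W es (i < ·)) (h2 : w ∈ kil W e (· < i)) : ∃ c : K, w = c • u i := by
  have key : ∀ y, y ∈ kil W es (i < ·) → y ∈ kil W e (· < i) → es i y = 0 → y = 0 := by
    intro y hy1 hy2 hy3
    rcases i with _ | i
    · refine H.seps y hy1.1 fun h => ?_
      rcases Nat.eq_zero_or_pos h with rfl | h0
      · exact hy3
      · exact hy1.2 h h0
    · refine H.vanish i y ⟨hy1.1, fun h hh => ?_⟩ hy2
      rcases Nat.eq_or_lt_of_le (show i + 1 ≤ h from hh) with rfl | h0
      · exact hy3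
      · exact hy1.2 h h0
  obtain ⟨z, hz⟩ := H.thin i
  obtain ⟨a, ha⟩ := hz _ (H.uP i).1
  obtain ⟨b, hb⟩ := hz _ h1.1
  have ha0 : a ≠ 0 := by
    rintro rfl
    exact hi (key _ (H.uP i) (H.uQ i) (by simpa using ha))
  refine ⟨b / a, sub_eq_zero.1 (key _ (Submodule.sub_mem _ h1 (Submodule.smul_mem _ _ (H.uP i)))
    (Submodule.sub_mem _ h2 (Submodule.smul_mem _ _ (H.uQ i))) ?_)⟩
  rw [map_sub, map_smul, ha, hb, smul_smul, div_mul_cancel₀ _ ha0, sub_self]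

theorem Au (H : SplitData W A As e es th ths d u) (i : ℕ) : A (u i) = u (i+1) + th i • u i := by
  rw [H.us]; simp

theorem Asu (H : SplitData W A As e es th ths d u) (i : ℕ) (hi : u i ≠ 0) :
    ∃ c : K, As (u (i+1)) - ths (i+1) • u (i+1) = c • u i :=
  H.line hi (H.stepAs_P (H.uP (i+1))) (H.stepAs_Q _ (H.uQ (i+1)))

theorem une (H : SplitData W A As e es th ths d u) (i : ℕ) (hi : i ≤ d) : u i ≠ 0 := by
  induction i using Nat.strong_induction_on with
  | _ i ih =>
  intro h0
  rcases i with _ | i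
  · exact H.u0ne h0
  set N : Submodule K V := Submodule.span K (u '' {j | j ≤ i}) with hN
  have hmem : ∀ j ≤ i, u j ∈ N := fun j hj => Submodule.subset_span ⟨j, hj, rfl⟩
  have hle : N ≤ kil W es (i < ·) := by
    refine Submodule.span_le.2 ?_
    rintro _ ⟨j, hj, rfl⟩
    exact ⟨(H.uP j).1, fun h hh => (H.uP j).2 h (by simp at hj; omega)⟩
  have hA : N ≤ N.comap A := by
    refine Submodule.span_le.2 ?_
    rintro _ ⟨j, hj, rfl⟩
    simp only [Set.mem_ofPred_eq] at hj
    show A (u j) ∈ N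
    rw [H.Au]
    refine N.add_mem ?_ (N.smul_mem _ (hmem j hj))
    rcases Nat.eq_or_lt_of_le hj with rfl | h
    · rw [h0]; exact N.zero_mem
    · exact hmem _ h
  have hAs : N ≤ N.comap As := by
    refine Submodule.span_le.2 ?_
    rintro _ ⟨j, hj, rfl⟩
    simp only [Set.mem_ofPred_eq] at hj
    show As (u j) ∈ N
    rcases j with _ | j
    · rw [H.stepAs_0 (H.uP 0)]; exact N.smul_mem _ (hmem 0 hj)
    · obtain ⟨c, hc⟩ := H.Asu j (ih j (by omega) (by omega))
      rw [sub_eq_iff_eq_add.1 hc]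
      exact N.add_mem (N.smul_mem _ (hmem j (by omega))) (N.smul_mem _ (hmem _ hj))
  rcases H.irr N (fun x hx => (hle hx).1) hA hAs with h | h
  · have := hmem 0 (Nat.zero_le _)
    rw [h] at this
    exact H.u0ne (by simpa using this)
  · obtain ⟨y, hy, hy'⟩ := H.nes (i+1) hi
    rw [← h] at hy
    exact absurd ((hle hy).2 (i+1) (by omega)) hy'

theorem Asu_ne (H : SplitData W A As e es th ths d u) (i : ℕ) (hi : i + 1 ≤ d) :
    ∃ c : K, c ≠ 0 ∧ As (u (i+1)) - ths (i+1) • u (i+1) = c • u i := by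
  obtain ⟨c, hc⟩ := H.Asu i (H.une i (by omega))
  refine ⟨c, ?_, hc⟩
  rintro rfl
  rw [zero_smul] at hc
  set N : Submodule K V := Submodule.span K (u '' {j | i + 1 ≤ j ∧ j ≤ d}) with hN
  have hmem : ∀ j, i + 1 ≤ j → j ≤ d → u j ∈ N :=
    fun j hj hj' => Submodule.subset_span ⟨j, ⟨hj, hj'⟩, rfl⟩
  have hle : N ≤ kil W e (· < i + 1) := by
    refine Submodule.span_le.2 ?_
    rintro _ ⟨j, ⟨hj, _⟩, rfl⟩
    exact ⟨(H.uP j).1, fun h hh => (H.uQ j).2 h (by omega)⟩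
  have hA : N ≤ N.comap A := by
    refine Submodule.span_le.2 ?_
    rintro _ ⟨j, ⟨hj, hj'⟩, rfl⟩
    show A (u j) ∈ N
    rw [H.Au]
    refine N.add_mem ?_ (N.smul_mem _ (hmem j hj hj'))
    rcases Nat.eq_or_lt_of_le hj' with rfl | h
    · rw [H.utop]; exact N.zero_mem
    · exact hmem _ (by omega) h
  have hAs : N ≤ N.comap As := by
    refine Submodule.span_le.2 ?_
    rintro _ ⟨j, ⟨hj, hj'⟩, rfl⟩
    show As (u j) ∈ N
    rcases j with _ | j
    · omega
    rcases Nat.eq_or_lt_of_le hj with h | h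
    · have : i = j := by omega
      subst this
      rw [sub_eq_zero.1 hc]
      exact N.smul_mem _ (hmem _ hj hj')
    · obtain ⟨c, hc⟩ := H.Asu j (H.une j (by omega))
      rw [sub_eq_iff_eq_add.1 hc]
      exact N.add_mem (N.smul_mem _ (hmem j (by omega) (by omega))) (N.smul_mem _ (hmem _ hj hj'))
  rcases H.irr N (fun x hx => (hle hx).1) hA hAs with h | h
  · have := hmem (i+1) le_rfl hi
    rw [h] at this
    exact H.une (i+1) hi (by simpa using this)
  · obtain ⟨y, hy, hy'⟩ := H.ne 0 (Nat.zero_le _)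
    rw [← h] at hy
    exact absurd ((hle hy).2 0 (by omega)) hy'

theorem linInd (H : SplitData W A As e es th ths d u) (n : ℕ) (hn : n ≤ d + 1) :
    LinearIndependent K (fun i : Fin n => u i) := by
  induction n with
  | zero => exact linearIndependent_empty_type
  | succ n ih =>
    rw [linearIndependent_finSucc']
    refine ⟨ih (by omega), fun hm => ?_⟩
    have hm : u n ∈ Submodule.span K (Set.range (fun i : Fin n => u i)) := by
      exact hm
    rcases n with _ | n
    · exact H.u0ne (by simpa using hm)
    have hle : Submodule.span K (Set.range (fun i : Fin (n+1) => u i)) ≤ kil W es (n < ·) := by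
      refine Submodule.span_le.2 ?_
      rintro _ ⟨j, rfl⟩
      exact ⟨(H.uP j).1, fun h hh => (H.uP j).2 h (by have := j.2; omega)⟩
    exact H.une (n+1) (by omega) (H.vanish n _ (hle hm) (H.uQ (n+1)))

theorem span_top (H : SplitData W A As e es th ths d u) :
    (⨆ i : Fin (d+1), Submodule.span K {u i}) = W := by
  set N : Submodule K V := ⨆ i : Fin (d+1), Submodule.span K {u i} with hN
  have hmem : ∀ j, j ≤ d → u j ∈ N := fun j hj =>
    (le_iSup (fun i : Fin (d+1) => Submodule.span K {u i}) ⟨j, by omega⟩)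
      (Submodule.mem_span_singleton_self _)
  have hle : N ≤ W := by
    refine iSup_le fun i => Submodule.span_le.2 ?_
    simpa using (H.uP i).1
  have hA : N ≤ N.comap A := by
    refine iSup_le fun ⟨j, hj⟩ => Submodule.span_le.2 ?_
    rw [Set.singleton_subset_iff]
    show A (u j) ∈ N
    rw [H.Au]
    refine N.add_mem ?_ (N.smul_mem _ (hmem j (by omega)))
    rcases Nat.eq_or_lt_of_le (Nat.lt_succ_iff.1 hj) with rfl | h
    · rw [H.utop]; exact N.zero_mem
    · exact hmem _ h
  have hAs : N ≤ N.comap As := by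
    refine iSup_le fun ⟨j, hj⟩ => Submodule.span_le.2 ?_
    rw [Set.singleton_subset_iff]
    show As (u j) ∈ N
    rcases j with _ | j
    · rw [H.stepAs_0 (H.uP 0)]; exact N.smul_mem _ (hmem 0 (by omega))
    · obtain ⟨c, hc⟩ := H.Asu j (H.une j (by omega))
      rw [sub_eq_iff_eq_add.1 hc]
      exact N.add_mem (N.smul_mem _ (hmem j (by omega))) (N.smul_mem _ (hmem _ (by omega)))
  rcases H.irr N hle hA hAs with h | h
  · have := hmem 0 (Nat.zero_le _)
    rw [h] at this
    exact absurd (by simpa using this) H.u0ne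
  · exact h

end

end SplitData

namespace SplitAux

/-- Polynomials in a matrix with a spectral decomposition. -/
theorem aeval_spec {Y : Type*} [Fintype Y] [DecidableEq Y] (D : ℕ) (E : ℕ → Matrix Y Y ℂ)
    (A : Matrix Y Y ℂ) (θ : ℕ → ℂ) (hsum : ∑ i ∈ Finset.range (D + 1), E i = 1)
    (hAE : ∀ i ≤ D, A * E i = θ i • E i) (p : Polynomial ℂ) (i : ℕ) (hi : i ≤ D) :
    Polynomial.aeval A p * E i = (p.eval (θ i)) • E i := by
  induction p using Polynomial.induction_on' with
  | add p q hp hq => rw [map_add, add_mul, hp, hq, Polynomial.eval_add, add_smul]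
  | monomial n a =>
    have : A ^ n * E i = (θ i) ^ n • E i := by
      induction n with
      | zero => simp
      | succ n ih => rw [pow_succ, mul_assoc, hAE i hi, mul_smul_comm, ih, smul_smul, pow_succ, mul_comm]
    rw [Polynomial.aeval_monomial, Polynomial.eval_monomial, mul_assoc, this, mul_smul,
      Algebra.algebraMap_eq_smul_one, smul_mul_assoc, one_mul]

theorem mul_spec {Y : Type*} [Fintype Y] [DecidableEq Y] (D : ℕ) (E : ℕ → Matrix Y Y ℂ)
    (A : Matrix Y Y ℂ) (θ : ℕ → ℂ)
    (hidem : ∀ i j : ℕ, i ≤ D → j ≤ D → E i * E j = if i = j then E i else 0)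
    (hA : A = ∑ i ∈ Finset.range (D + 1), θ i • E i) (i : ℕ) (hi : i ≤ D) :
    A * E i = θ i • E i ∧ E i * A = θ i • E i := by
  constructor
  · rw [hA, Finset.sum_mul, Finset.sum_eq_single i]
    · rw [smul_mul_assoc, hidem i i hi hi, if_pos rfl]
    · intro j hj hji
      rw [smul_mul_assoc, hidem j i (by simp at hj; omega) hi, if_neg hji, smul_zero]
    · intro h; simp at h; omega
  · rw [hA, Finset.mul_sum, Finset.sum_eq_single i]
    · rw [mul_smul_comm, hidem i i hi hi, if_pos rfl]
    · intro j hj hji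
      rw [mul_smul_comm, hidem i j hi (by simp at hj; omega), if_neg (Ne.symm hji), smul_zero]
    · intro h; simp at h; omega

theorem mem_adjoin_spec {Y : Type*} [Fintype Y] [DecidableEq Y] (D : ℕ) (E : ℕ → Matrix Y Y ℂ)
    (A : Matrix Y Y ℂ) (θ : ℕ → ℂ) (hsum : ∑ i ∈ Finset.range (D + 1), E i = 1)
    (hidem : ∀ i j : ℕ, i ≤ D → j ≤ D → E i * E j = if i = j then E i else 0)
    (hinj : ∀ i j : ℕ, i ≤ D → j ≤ D → θ i = θ j → i = j)
    (hA : A = ∑ i ∈ Finset.range (D + 1), θ i • E i) (i : ℕ) (hi : i ≤ D) :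
    ∃ p : Polynomial ℂ, E i = Polynomial.aeval A p := by
  have hin : Set.InjOn θ (Finset.range (D+1) : Set ℕ) := by
    intro a ha b hb hab
    simp at ha hb
    exact hinj a b (by omega) (by omega) hab
  have him : i ∈ Finset.range (D+1) := by simp; omega
  refine ⟨Lagrange.basis (Finset.range (D+1)) θ i, ?_⟩
  have h := fun j hj => aeval_spec D E A θ hsum (fun i hi => (mul_spec D E A θ hidem hA i hi).1)
    (Lagrange.basis (Finset.range (D+1)) θ i) j hj
  rw [← mul_one (Polynomial.aeval A _), ← hsum, Finset.mul_sum, Finset.sum_eq_single i]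
  · rw [h i hi, Lagrange.eval_basis_self hin him, one_smul]
  · intro j hj hji
    rw [h j (by simp at hj; omega), Lagrange.eval_basis_of_ne (Ne.symm hji) hj, zero_smul]
  · intro h; exact absurd him h

variable {X : Type*} [Fintype X] [DecidableEq X]

theorem Estar_mulVec (S : TSetup X) (i : ℕ) (hi : i ≤ S.D) (w : X → ℂ) (y : X) :
    (S.Estar i *ᵥ w) y = if S.G.dist S.x y = i then w y else 0 := by
  simp only [Matrix.mulVec, dotProduct, S.hEstar i hi]
  rw [Finset.sum_eq_single y]
  · simp
  · intro b _ hb; simp [Ne.symm hb]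
  · simp

theorem Estar_idem (S : TSetup X) (i j : ℕ) (hi : i ≤ S.D) (hj : j ≤ S.D) :
    S.Estar i * S.Estar j = if i = j then S.Estar i else 0 := by
  apply Matrix.toLin'.injective
  ext1 y
  ext1
  ext z
  simp only [LinearMap.comp_apply, Matrix.toLin'_apply, ← Matrix.mulVec_mulVec]
  rw [Estar_mulVec S i hi, Estar_mulVec S j hj]
  by_cases h : i = j
  · subst h
    rw [if_pos rfl, Estar_mulVec S i hi]
    split_ifs <;> rfl
  · rw [if_neg h, Matrix.zero_mulVec]
    split_ifs with h1 h2
    · omega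
    · rfl
    · rfl

theorem Estar_sum (S : TSetup X) : ∑ i ∈ Finset.range (S.D + 1), S.Estar i = 1 := by
  ext y z
  rw [Matrix.sum_apply, Finset.sum_congr rfl (fun i hi => S.hEstar i (by simp at hi; omega) y z)]
  by_cases h : y = z
  · subst h
    have := S.hDiamLe S.x y
    rw [Finset.sum_eq_single (S.G.dist S.x y)]
    · simp
    · intro b _ hb; simp [Ne.symm hb]
    · intro h; simp at h; omega
  · simp [h]

theorem E_mem (S : TSetup X) (i : ℕ) : S.E i ∈ S.T := by
  by_cases hi : i ≤ S.D
  · obtain ⟨p, hp⟩ := mem_adjoin_spec S.D S.E S.A (fun i => (S.θ i : ℂ)) S.hEsum S.hEidem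
      (fun i j hi hj h => S.hθinj i j hi hj (by exact_mod_cast h)) S.hAspec i hi
    rw [hp]
    exact Algebra.adjoin_mono (by simp) (Polynomial.aeval_mem_adjoin_singleton ℂ _)
  · rw [S.hEzero i (by omega)]; exact S.T.zero_mem

theorem Estar_mem (S : TSetup X) (i : ℕ) : S.Estar i ∈ S.T := by
  by_cases hi : i ≤ S.D
  · obtain ⟨p, hp⟩ := mem_adjoin_spec S.D S.Estar S.Astar (fun i => (S.θstar i : ℂ)) (Estar_sum S)
      (Estar_idem S) (fun i j hi hj h => S.hθstarinj i j hi hj (by exact_mod_cast h))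
      S.hAstarspec i hi
    rw [hp]
    exact Algebra.adjoin_mono (by simp) (Polynomial.aeval_mem_adjoin_singleton ℂ _)
  · rw [S.hEstarzero i (by omega)]; exact S.T.zero_mem

open scoped ComplexOrder in
/-- `E_i A* E_j = 0` when `q^1_{ij} = 0`. -/
theorem E_Astar_E (S : TSetup X) (i j : ℕ) (hi : i ≤ S.D) (hj : j ≤ S.D)
    (hq : S.q 1 i j = 0) : S.E i * S.Astar * S.E j = 0 := by
  have hsy : ∀ k a b, S.E k a b = S.E k b a := fun k a b => by
    conv_lhs => rw [← S.hEsymm k]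
    rfl
  have hre : ∀ k a b, starRingEnd ℂ (S.E k a b) = S.E k a b := fun k a b => by
    conv_rhs => rw [← S.hEreal k]
    rfl
  have hAs : S.Astar = Matrix.diagonal (fun y => (Fintype.card X : ℂ) * S.E 1 S.x y) := by
    ext y z
    rw [S.hAstar, Matrix.diagonal_apply]
  have hH : (S.E i * S.Astar * S.E j)ᴴ = S.E j * S.Astar * S.E i := by
    have hEH : ∀ k, (S.E k)ᴴ = S.E k := fun k => by
      ext a b
      rw [Matrix.conjTranspose_apply, ← starRingEnd_apply, hre, hsy]
    have hAH : S.Astarᴴ = S.Astar := by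
      rw [hAs, Matrix.diagonal_conjTranspose]
      congr 1
      ext y
      rw [Pi.star_apply, ← starRingEnd_apply, map_mul, hre]
      simp
    rw [Matrix.conjTranspose_mul, Matrix.conjTranspose_mul, hEH, hEH, hAH, mul_assoc]
  rw [← Matrix.trace_mul_conjTranspose_self_eq_zero_iff, hH]
  have h1 : S.E i * S.Astar * S.E j * (S.E j * S.Astar * S.E i)
      = S.E i * (S.Astar * S.E j * S.Astar * S.E i) := by
    have : S.E j * S.E j = S.E j := by rw [S.hEidem j j hj hj, if_pos rfl]
    calc _ = S.E i * S.Astar * (S.E j * S.E j) * S.Astar * S.E i := by simp only [mul_assoc]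
      _ = _ := by rw [this]; simp only [mul_assoc]
  rw [h1, Matrix.trace_mul_comm, mul_assoc _ (S.E i),
    show S.E i * S.E i = S.E i by rw [S.hEidem i i hi hi, if_pos rfl]]
  have h2 : Matrix.trace (S.Astar * S.E j * S.Astar * S.E i) =
      (Fintype.card X : ℂ)^2 * (S.E 1 * (Matrix.hadamard (S.E i) (S.E j)) * S.E 1) S.x S.x := by
    rw [hAs]
    simp only [Matrix.trace, Matrix.diag_apply, Matrix.mul_apply (N := S.E i),
      Matrix.mul_apply (N := S.E 1), Matrix.mul_apply (N := Matrix.hadamard _ _),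
      Matrix.mul_diagonal, Matrix.diagonal_mul, Matrix.hadamard_apply]
    rw [Finset.mul_sum, Finset.sum_comm]
    refine Finset.sum_congr rfl fun a _ => ?_
    rw [Finset.sum_mul, Finset.mul_sum]
    refine Finset.sum_congr rfl fun b _ => ?_
    rw [hsy i a b, hsy 1 a S.x]
    ring
  rw [h2, S.hKrein i j hi hj]
  have h3 : S.E 1 * ((Fintype.card X : ℂ)⁻¹ • ∑ h ∈ Finset.range (S.D + 1), (S.q h i j : ℂ) • S.E h)
      = 0 := by
    rw [mul_smul_comm, Finset.mul_sum, Finset.sum_eq_zero, smul_zero]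
    intro h hh
    have h1D : 1 ≤ S.D := by have := S.hD3; omega
    rw [mul_smul_comm, S.hEidem 1 h h1D (by simp at hh; omega)]
    split_ifs with h1
    · subst h1; simp [hq]
    · simp
  rw [h3, zero_mul]; simp

theorem sum_E_mulVec (S : TSetup X) (w : X → ℂ) :
    w = ∑ i ∈ Finset.range (S.D + 1), S.E i *ᵥ w := by
  rw [← Matrix.sum_mulVec, S.hEsum, Matrix.one_mulVec]

theorem sum_Estar_mulVec (S : TSetup X) (w : X → ℂ) :
    w = ∑ i ∈ Finset.range (S.D + 1), S.Estar i *ᵥ w := by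
  rw [← Matrix.sum_mulVec, Estar_sum S, Matrix.one_mulVec]

theorem kill_E (S : TSetup X) (M : TMod S) (i : ℕ) (h : ¬ (M.t ≤ i ∧ i ≤ M.t + M.d))
    (w : X → ℂ) (hw : w ∈ M.W) : S.E i *ᵥ w = 0 := by
  have h1 : M.W.map (S.E i).mulVecLin = ⊥ := by
    by_contra hc; exact h ((M.ht i).1 hc)
  have : (S.E i).mulVecLin w ∈ M.W.map (S.E i).mulVecLin := Submodule.mem_map_of_mem hw
  rw [h1] at this
  simpa using this

theorem kill_Estar (S : TSetup X) (M : TMod S) (i : ℕ) (h : ¬ (M.r ≤ i ∧ i ≤ M.r + M.d))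
    (w : X → ℂ) (hw : w ∈ M.W) : S.Estar i *ᵥ w = 0 := by
  have h1 : M.W.map (S.Estar i).mulVecLin = ⊥ := by
    by_contra hc; exact h ((M.hr i).1 hc)
  have : (S.Estar i).mulVecLin w ∈ M.W.map (S.Estar i).mulVecLin := Submodule.mem_map_of_mem hw
  rw [h1] at this
  simpa using this

theorem ne_of_map (W : Submodule ℂ (X → ℂ)) (B : Matrix X X ℂ) (h : W.map B.mulVecLin ≠ ⊥) :
    ∃ w ∈ W, B *ᵥ w ≠ 0 := by
  obtain ⟨y, hy, hy0⟩ := Submodule.exists_mem_ne_zero_of_ne_bot h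
  obtain ⟨w, hw, rfl⟩ := hy
  exact ⟨w, hw, by simpa using hy0⟩

theorem rd_le (S : TSetup X) (M : TMod S) : M.r + M.d ≤ S.D := by
  by_contra h
  have := (M.hr (M.r + M.d)).2 ⟨by omega, le_rfl⟩
  rw [S.hEstarzero _ (by omega)] at this
  exact this (by simp)

theorem td_le (S : TSetup X) (M : TMod S) : M.t + M.d ≤ S.D := by
  by_contra h
  have := (M.ht (M.t + M.d)).2 ⟨by omega, le_rfl⟩
  rw [S.hEzero _ (by omega)] at this
  exact this (by simp)

theorem E_A (S : TSetup X) (i : ℕ) : S.E i * S.A = (S.θ i : ℂ) • S.E i := by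
  by_cases hi : i ≤ S.D
  · exact (mul_spec S.D S.E S.A (fun i => (S.θ i : ℂ)) S.hEidem S.hAspec i hi).2
  · rw [S.hEzero i (by omega)]; simp

theorem Estar_Astar (S : TSetup X) (i : ℕ) : S.Estar i * S.Astar = (S.θstar i : ℂ) • S.Estar i := by
  by_cases hi : i ≤ S.D
  · exact (mul_spec S.D S.Estar S.Astar (fun i => (S.θstar i : ℂ)) (Estar_idem S) S.hAstarspec i hi).2
  · rw [S.hEstarzero i (by omega)]; simp

theorem E_E_ne (S : TSetup X) (i j : ℕ) (hij : i ≠ j) : S.E i * S.E j = 0 := by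
  by_cases hi : i ≤ S.D
  · by_cases hj : j ≤ S.D
    · rw [S.hEidem i j hi hj, if_neg hij]
    · rw [S.hEzero j (by omega), mul_zero]
  · rw [S.hEzero i (by omega), zero_mul]

theorem Estar_Estar_ne (S : TSetup X) (i j : ℕ) (hij : i ≠ j) : S.Estar i * S.Estar j = 0 := by
  by_cases hi : i ≤ S.D
  · by_cases hj : j ≤ S.D
    · rw [Estar_idem S i j hi hj, if_neg hij]
    · rw [S.hEstarzero j (by omega), mul_zero]
  · rw [S.hEstarzero i (by omega), zero_mul]

theorem dist_adj (S : TSetup X) (y z : X) (h : S.G.Adj y z) :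
    S.G.dist S.x y ≤ S.G.dist S.x z + 1 := by
  have h1 := S.hGconn.dist_triangle (u := S.x) (v := z) (w := y)
  rw [(SimpleGraph.dist_eq_one_iff_adj.2 h.symm)] at h1
  exact h1

theorem tri (S : TSetup X) (M : TMod S) (i : ℕ) (w : X → ℂ)
    (hw : ∀ h, i < h → S.Estar (M.r + h) *ᵥ w = 0) (h : ℕ) (hh : i + 1 < h) :
    S.Estar (M.r + h) *ᵥ (S.A *ᵥ w) = 0 := by
  by_cases hD : M.r + h ≤ S.D
  · ext y
    rw [Estar_mulVec S _ hD]
    split_ifs with hy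
    · simp only [Matrix.mulVec, dotProduct, Pi.zero_apply]
      refine Finset.sum_eq_zero fun z _ => ?_
      rw [S.hA]
      split_ifs with hyz
      · have h1 := dist_adj S y z hyz
        have h2 := S.hDiamLe S.x z
        have h3 := congrFun (hw (S.G.dist S.x z - M.r) (by omega)) z
        rw [Estar_mulVec S _ (by omega), if_pos (by omega)] at h3
        rw [h3]; simp
      · simp
    · rfl
  · rw [S.hEstarzero _ (by omega), Matrix.zero_mulVec]

theorem tris (S : TSetup X) (M : TMod S) (j : ℕ) (w : X → ℂ) (hwW : w ∈ M.W)
    (hw : ∀ h, h < j → S.E (M.t + h) *ᵥ w = 0) (h : ℕ) (hh : h + 1 < j) :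
    S.E (M.t + h) *ᵥ (S.Astar *ᵥ w) = 0 := by
  by_cases hD : M.t + h ≤ S.D
  · rw [sum_E_mulVec S w, Matrix.mulVec_sum, Matrix.mulVec_sum]
    refine Finset.sum_eq_zero fun k hk => ?_
    simp only [Finset.mem_range] at hk
    by_cases hk' : k < M.t + j
    · have : S.E k *ᵥ w = 0 := by
        by_cases hkt : M.t ≤ k
        · have := hw (k - M.t) (by omega)
          rwa [Nat.add_sub_cancel' hkt] at this
        · exact kill_E S M k (by omega) w hwW
      rw [this]; simp
    · have h1D : 1 ≤ S.D := by have := S.hD3; omega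
      rw [Matrix.mulVec_mulVec, Matrix.mulVec_mulVec,
        E_Astar_E S _ k hD (by omega)
          (S.hQpoly0 1 _ k h1D hD (by omega) (by omega)), Matrix.zero_mulVec]
  · rw [S.hEzero _ (by omega), Matrix.zero_mulVec]

theorem inv_T (S : TSetup X) (N : Submodule ℂ (X → ℂ)) (hA : ∀ w ∈ N, S.A *ᵥ w ∈ N)
    (hAs : ∀ w ∈ N, S.Astar *ᵥ w ∈ N) (B : Matrix X X ℂ) (hB : B ∈ S.T) :
    ∀ w ∈ N, B *ᵥ w ∈ N := by
  induction hB using Algebra.adjoin_induction with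
  | mem x hx =>
    rcases hx with rfl | rfl
    · exact hA
    · exact hAs
  | algebraMap c =>
    intro w hw
    rw [Algebra.algebraMap_eq_smul_one, Matrix.smul_mulVec, Matrix.one_mulVec]
    exact N.smul_mem _ hw
  | add x y _ _ hx hy =>
    intro w hw
    rw [Matrix.add_mulVec]; exact N.add_mem (hx w hw) (hy w hw)
  | mul x y _ _ hx hy =>
    intro w hw
    rw [← Matrix.mulVec_mulVec]; exact hx _ (hy w hw)

/-- The polynomial `τ_i`. -/
def tau (S : TSetup X) (M : TMod S) (i : ℕ) : Polynomial ℂ :=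
  ∏ h ∈ Finset.range i, (Polynomial.X - Polynomial.C ((S.θ (M.t + h) : ℂ)))

theorem splitData (S : TSetup X) (M : TMod S) (v : X → ℂ) (hv0 : v ≠ 0)
    (hv : v ∈ M.W.map (S.Estar M.r).mulVecLin) :
    SplitData M.W S.A.mulVecLin S.Astar.mulVecLin (fun i => (S.E (M.t + i)).mulVecLin)
      (fun i => (S.Estar (M.r + i)).mulVecLin) (fun i => (S.θ (M.t + i) : ℂ))
      (fun i => (S.θstar (M.r + i) : ℂ)) M.d
      (fun i => (Polynomial.aeval S.A (tau S M i)) *ᵥ v) := by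
  have hAT : S.A ∈ S.T := Algebra.subset_adjoin (by simp)
  have hAsT : S.Astar ∈ S.T := Algebra.subset_adjoin (by simp)
  obtain ⟨w0, hw0, hw0v⟩ := hv
  simp only [Matrix.mulVecLin_apply] at hw0v
  have hvW : v ∈ M.W := by rw [← hw0v]; exact M.hWinv _ (Estar_mem S _) _ hw0
  refine
    { invA := fun w hw => M.hWinv _ hAT w hw
      invAs := fun w hw => M.hWinv _ hAsT w hw
      eA := ?_
      esAs := ?_
      tri := fun i w _ h => tri S M i w h
      tris := fun i w hW h => tris S M i w hW h
      sep := ?_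
      seps := ?_
      ehi := ?_
      ne := ?_
      nes := ?_
      thin := ?_
      irr := ?_
      u0W := ?_
      u0ne := ?_
      u0 := ?_
      us := ?_ }
  · intro i w _
    simp only [Matrix.mulVecLin_apply]
    rw [Matrix.mulVec_mulVec, E_A, Matrix.smul_mulVec]
  · intro i w _
    simp only [Matrix.mulVecLin_apply]
    rw [Matrix.mulVec_mulVec, Estar_Astar, Matrix.smul_mulVec]
  · intro w hw h
    simp only [Matrix.mulVecLin_apply] at h
    rw [sum_E_mulVec S w]
    refine Finset.sum_eq_zero fun k _ => ?_
    by_cases hk : M.t ≤ k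
    · have := h (k - M.t)
      rwa [Nat.add_sub_cancel' hk] at this
    · exact kill_E S M k (by omega) w hw
  · intro w hw h
    simp only [Matrix.mulVecLin_apply] at h
    rw [sum_Estar_mulVec S w]
    refine Finset.sum_eq_zero fun k _ => ?_
    by_cases hk : M.r ≤ k
    · have := h (k - M.r)
      rwa [Nat.add_sub_cancel' hk] at this
    · exact kill_Estar S M k (by omega) w hw
  · intro i hi w hw
    exact kill_E S M _ (by omega) w hw
  · intro i hi
    exact ne_of_map _ _ ((M.ht _).2 ⟨by omega, by omega⟩)
  · intro i hi
    exact ne_of_map _ _ ((M.hr _).2 ⟨by omega, by omega⟩)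
  · intro i
    obtain ⟨z, hz⟩ := finrank_le_one_iff.1 (M.hthin (M.r + i))
    refine ⟨z, fun w hw => ?_⟩
    obtain ⟨c, hc⟩ := hz ⟨_, Submodule.mem_map_of_mem hw⟩
    exact ⟨c, (congrArg Subtype.val hc).symm⟩
  · intro N hN hA hAs
    exact M.hWirr N hN fun B hB => inv_T S N hA hAs B hB
  · simpa [tau] using hvW
  · simpa [tau] using hv0
  · intro h hh
    simp only [tau, Finset.range_zero, Finset.prod_empty, map_one, Matrix.one_mulVec,
      Matrix.mulVecLin_apply]
    rw [← hw0v, Matrix.mulVec_mulVec, Estar_Estar_ne S _ _ (by omega), Matrix.zero_mulVec]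
  · intro i
    simp only [tau, Matrix.mulVecLin_apply]
    rw [Finset.prod_range_succ, mul_comm, map_mul, map_sub, Polynomial.aeval_X, Polynomial.aeval_C,
      ← Matrix.mulVec_mulVec, Matrix.sub_mulVec, Algebra.algebraMap_eq_smul_one,
      Matrix.smul_mulVec, Matrix.one_mulVec]

theorem supStar (S : TSetup X) (M : TMod S) (i : ℕ) :
    (⨆ h ∈ Finset.range (i + 1), M.W.map (S.Estar (M.r + h)).mulVecLin) =
      SplitData.kil M.W (fun i => (S.Estar (M.r + i)).mulVecLin) (i < ·) := by
  apply le_antisymm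
  · refine iSup₂_le fun h hh => ?_
    rintro _ ⟨w, hw, rfl⟩
    simp only [Finset.mem_range] at hh
    refine ⟨M.hWinv _ (Estar_mem S _) w hw, fun k hk => ?_⟩
    simp only [Matrix.mulVecLin_apply]
    rw [Matrix.mulVec_mulVec, Estar_Estar_ne S _ _ (by omega), Matrix.zero_mulVec]
  · rintro w ⟨hw, hk⟩
    rw [sum_Estar_mulVec S w]
    refine Submodule.sum_mem _ fun k _ => ?_
    by_cases h : M.r ≤ k ∧ k ≤ M.r + i
    · obtain ⟨h', rfl⟩ := Nat.exists_eq_add_of_le h.1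
      refine Submodule.mem_iSup_of_mem h' (Submodule.mem_iSup_of_mem (by simp; omega) ?_)
      exact ⟨w, hw, rfl⟩
    · have : S.Estar k *ᵥ w = 0 := by
        by_cases hrk : M.r ≤ k
        · obtain ⟨h', rfl⟩ := Nat.exists_eq_add_of_le hrk
          exact hk h' (by omega)
        · exact kill_Estar S M k (by omega) w hw
      rw [this]; exact Submodule.zero_mem _

theorem sup (S : TSetup X) (M : TMod S) (i : ℕ) :
    (⨆ h ∈ Finset.Icc i M.d, M.W.map (S.E (M.t + h)).mulVecLin) =
      SplitData.kil M.W (fun i => (S.E (M.t + i)).mulVecLin) (· < i) := by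
  apply le_antisymm
  · refine iSup₂_le fun h hh => ?_
    rintro _ ⟨w, hw, rfl⟩
    simp only [Finset.mem_Icc] at hh
    refine ⟨M.hWinv _ (E_mem S _) w hw, fun k hk => ?_⟩
    simp only [Matrix.mulVecLin_apply]
    rw [Matrix.mulVec_mulVec, E_E_ne S _ _ (by omega), Matrix.zero_mulVec]
  · rintro w ⟨hw, hk⟩
    rw [sum_E_mulVec S w]
    refine Submodule.sum_mem _ fun k _ => ?_
    by_cases h : M.t + i ≤ k ∧ k ≤ M.t + M.d
    · obtain ⟨h', rfl⟩ := Nat.exists_eq_add_of_le (show M.t ≤ k by omega)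
      refine Submodule.mem_iSup_of_mem h' (Submodule.mem_iSup_of_mem (by simp; omega) ?_)
      exact ⟨w, hw, rfl⟩
    · have : S.E k *ᵥ w = 0 := by
        by_cases hrk : M.t ≤ k ∧ k ≤ M.t + M.d
        · obtain ⟨h', rfl⟩ := Nat.exists_eq_add_of_le hrk.1
          exact hk h' (by omega)
        · exact kill_E S M k hrk w hw
      rw [this]; exact Submodule.zero_mem _

end SplitAux

/-- The split decomposition: with `U_i = τ_i(A) E*_r W` (and `U_{-1} = 0`, `U_{d+1} = 0`):
(i) each `U_i` is one-dimensional and `W = U_0 ⊕ ⋯ ⊕ U_d`;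
(ii) `U_i = (Σ_{h=0}^i E*_{r+h} W) ∩ (Σ_{h=i}^d E_{t+h} W)`;
(iii) `(A - θ_{t+i} I) U_i = U_{i+1}` and `(A* - θ*_{r+i} I) U_i = U_{i-1}`. -/
theorem stmt18 (S : TSetup X) (M : TMod S) (hd : 0 < M.d) :
    let U : ℕ → Submodule ℂ (X → ℂ) := fun i =>
      if i ≤ M.d then
        (M.W.map (S.Estar M.r).mulVecLin).map
          (Polynomial.aeval S.A
            (∏ h ∈ Finset.range i,
              (Polynomial.X - Polynomial.C ((S.θ (M.t + h) : ℂ))))).mulVecLin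
      else ⊥
    (∀ i ≤ M.d, Module.finrank ℂ (U i) = 1) ∧
    iSupIndep (fun i : Fin (M.d + 1) => U (i : ℕ)) ∧
    (⨆ i : Fin (M.d + 1), U (i : ℕ)) = M.W ∧
    (∀ i ≤ M.d,
      U i = (⨆ h ∈ Finset.range (i + 1), M.W.map (S.Estar (M.r + h)).mulVecLin) ⊓
        (⨆ h ∈ Finset.Icc i M.d, M.W.map (S.E (M.t + h)).mulVecLin)) ∧
    (∀ i ≤ M.d,
      (U i).map (S.A - ((S.θ (M.t + i) : ℂ)) • 1).mulVecLin = U (i + 1) ∧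
      (U i).map (S.Astar - ((S.θstar (M.r + i) : ℂ)) • 1).mulVecLin =
        (if i = 0 then ⊥ else U (i - 1))) := by
  intro U
  obtain ⟨v, hv, hv0⟩ := Submodule.exists_mem_ne_zero_of_ne_bot
    ((M.hr M.r).2 ⟨le_rfl, by omega⟩)
  have H := SplitAux.splitData S M v hv0 hv
  set u : ℕ → X → ℂ := fun i => (Polynomial.aeval S.A (SplitAux.tau S M i)) *ᵥ v with hu
  have hline : M.W.map (S.Estar M.r).mulVecLin = Submodule.span ℂ {v} := by
    apply le_antisymm
    · intro w hw
      obtain ⟨z, hz⟩ := finrank_le_one_iff.1 (M.hthin M.r)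
      obtain ⟨a, ha⟩ := hz ⟨v, hv⟩
      obtain ⟨b, hb⟩ := hz ⟨w, hw⟩
      have ha := congrArg Subtype.val ha
      have hb := congrArg Subtype.val hb
      simp only [Submodule.coe_smul] at ha hb
      have ha0 : a ≠ 0 := by
        rintro rfl
        exact hv0 (by rw [← ha, zero_smul])
      refine Submodule.mem_span_singleton.2 ⟨b / a, ?_⟩
      rw [← ha, ← hb, smul_smul, div_mul_cancel₀ _ ha0]
    · rw [Submodule.span_le, Set.singleton_subset_iff]; exact hv
  have hU : ∀ i, i ≤ M.d → U i = Submodule.span ℂ {u i} := by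
    intro i hi
    simp only [U, if_pos hi]
    rw [hline, Submodule.map_span, Set.image_singleton]
    rfl
  have hUF : (fun i : Fin (M.d + 1) => U (i : ℕ)) = fun i : Fin (M.d + 1) =>
      Submodule.span ℂ {u i} := by
    funext i
    exact hU i (by have := i.2; omega)
  refine ⟨?_, ?_, ?_, ?_, ?_⟩
  · intro i hi
    rw [hU i hi]
    exact finrank_span_singleton (H.une i hi)
  · rw [hUF]
    exact (H.linInd (M.d + 1) le_rfl).iSupIndep_span_singleton
  · rw [hUF]
    exact H.span_top
  · intro i hi
    rw [hU i hi, SplitAux.supStar, SplitAux.sup]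
    apply le_antisymm
    · rw [Submodule.span_le, Set.singleton_subset_iff]
      exact ⟨H.uP i, H.uQ i⟩
    · rintro w ⟨h1, h2⟩
      obtain ⟨c, hc⟩ := H.line (H.une i hi) h1 h2
      exact Submodule.mem_span_singleton.2 ⟨c, hc.symm⟩
  · intro i hi
    have hsub : ∀ (B : Matrix X X ℂ) (c : ℂ) (w : X → ℂ),
        (B - c • (1 : Matrix X X ℂ)).mulVecLin w = B.mulVecLin w - c • w := by
      intro B c w
      simp only [Matrix.mulVecLin_apply]
      rw [Matrix.sub_mulVec, Matrix.smul_mulVec, Matrix.one_mulVec]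
    constructor
    · rw [hU i hi, Submodule.map_span, Set.image_singleton, hsub, ← H.us i]
      by_cases h : i + 1 ≤ M.d
      · rw [hU _ h]
      · have : i = M.d := by omega
        subst this
        rw [H.utop]
        simp [U]
    · rw [hU i hi, Submodule.map_span, Set.image_singleton, hsub]
      rcases i with _ | i
      · rw [if_pos rfl, H.stepAs_0 (H.uP 0), sub_self]
        simp
      · obtain ⟨c, hc0, hc⟩ := H.Asu_ne i hi
        rw [if_neg (by omega), hc, Nat.add_sub_cancel, hU i (by omega)]
        exact Submodule.span_singleton_smul_eq (IsUnit.mk0 c hc0) _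
end
end

section
/- For 0 ≤ i ≤ d, u_i = Σ_{h=0}^i (τ*_h(θ*_{r+i})/(φ_1φ_2···φ_h))·τ_h as polynomials in ℂ[λ]; dually, u*_i = Σ_{h=0}^i (τ_h(θ_{t+i})/(φ_1φ_2···φ_h))·τ*_h (the empty product φ_1···φ_0 being 1). -/
open Matrix
open scoped Classical

noncomputable section

variable {X : Type*} [Fintype X] [DecidableEq X]

section LeonardCore

open Polynomial

variable {K V : Type*} [Field K] [AddCommGroup V] [Module K V]

/-- Tridiagonal / diagonal data for a pair `A, B` on `V` with respect to a basis `v`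
with coordinate functionals `ε`. -/
structure TDData (d : ℕ) (A B : V →ₗ[K] V) (th a x : ℕ → K) (v : ℕ → V)
    (ε : ℕ → V →ₗ[K] K) : Prop where
  dual : ∀ i ≤ d, ∀ j ≤ d, ε i (v j) = if i = j then 1 else 0
  expand : ∀ y, y = ∑ i ∈ Finset.range (d + 1), ε i y • v i
  diag : ∀ i ≤ d, B (v i) = th i • v i
  up : ∀ i, i + 1 ≤ d → ε (i + 1) (A (v i)) = 1
  mid : ∀ i ≤ d, ε i (A (v i)) = a i
  down : ∀ i, i + 1 ≤ d → ε i (A (v (i + 1))) = x (i + 1)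
  far : ∀ i ≤ d, ∀ j ≤ d, (i + 1 < j ∨ j + 1 < i) → ε i (A (v j)) = 0
  xne : ∀ i, i + 1 ≤ d → x (i + 1) ≠ 0

namespace TDData

variable {d : ℕ} {A B : V →ₗ[K] V} {th a x : ℕ → K} {v : ℕ → V} {ε : ℕ → V →ₗ[K] K}

theorem ext0 (H : TDData d A B th a x v ε) {y z : V} (h : ∀ j ≤ d, ε j y = ε j z) : y = z := by
  rw [H.expand y, H.expand z]
  refine Finset.sum_congr rfl fun i hi => ?_
  rw [h i (by simpa [Nat.lt_succ_iff] using hi)]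

theorem epsA (H : TDData d A B th a x v ε) (j : ℕ) (y : V) :
    ε j (A y) = ∑ i ∈ Finset.range (d + 1), ε i y * ε j (A (v i)) := by
  conv_lhs => rw [H.expand y]
  simp [map_sum]

theorem epsB (H : TDData d A B th a x v ε) (j : ℕ) (hj : j ≤ d) (y : V) :
    ε j (B y) = th j * ε j y := by
  conv_lhs => rw [H.expand y]
  simp only [map_sum, map_smul, smul_eq_mul]
  rw [Finset.sum_eq_single j]
  · rw [H.diag j hj, map_smul, H.dual j hj j hj]; simp; ring
  · intro i hi hij
    have hi' : i ≤ d := by simpa [Nat.lt_succ_iff] using hi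
    rw [H.diag i hi', map_smul, H.dual j hj i hi', if_neg (Ne.symm hij)]; simp
  · intro h; exact absurd (Finset.mem_range.2 (by omega)) h

theorem epsA_succ (H : TDData d A B th a x v ε) (j : ℕ) (hj : j + 1 ≤ d) (y : V) :
    ε (j + 1) (A y) = ε j y + a (j + 1) * ε (j + 1) y +
      (if j + 2 ≤ d then x (j + 2) * ε (j + 2) y else 0) := by
  rw [H.epsA]
  have key : ∀ i ∈ Finset.range (d + 1), ε i y * ε (j + 1) (A (v i)) =
      (if i = j then ε j y else 0) + (if i = j + 1 then a (j + 1) * ε (j + 1) y else 0)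
        + (if i = j + 2 then x (j + 2) * ε (j + 2) y else 0) := by
    intro i hi
    have hi' : i ≤ d := by simpa [Nat.lt_succ_iff] using hi
    by_cases h1 : i = j
    · subst h1; simp [H.up i hj]
    by_cases h2 : i = j + 1
    · subst h2; simp [H.mid _ hj, mul_comm]
    by_cases h3 : i = j + 2
    · subst h3; simp [H.down _ hi', mul_comm]
    · rw [H.far (j + 1) hj i hi' (by omega)]; simp [h1, h2, h3]
  rw [Finset.sum_congr rfl key]
  simp only [Finset.sum_add_distrib, Finset.sum_ite_eq', Finset.mem_range]
  rw [if_pos (by omega), if_pos (by omega)]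
  simp [Nat.lt_succ_iff]

theorem epsA_zero (H : TDData d A B th a x v ε) (y : V) :
    ε 0 (A y) = a 0 * ε 0 y + (if 1 ≤ d then x 1 * ε 1 y else 0) := by
  rw [H.epsA]
  have key : ∀ i ∈ Finset.range (d + 1), ε i y * ε 0 (A (v i)) =
      (if i = 0 then a 0 * ε 0 y else 0)
        + (if i = 1 then x 1 * ε 1 y else 0) := by
    intro i hi
    have hi' : i ≤ d := by simpa [Nat.lt_succ_iff] using hi
    by_cases h2 : i = 0
    · subst h2; simp [H.mid _ hi', mul_comm]
    by_cases h3 : i = 1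
    · subst h3; simp [H.down _ hi', mul_comm]
    · rw [H.far 0 (by omega) i hi' (by omega)]; simp [h2, h3]
  rw [Finset.sum_congr rfl key]
  simp only [Finset.sum_add_distrib, Finset.sum_ite_eq', Finset.mem_range]
  rw [if_pos (by omega)]
  simp [Nat.lt_succ_iff, Nat.one_le_iff_ne_zero, Nat.pos_iff_ne_zero]

theorem pow_gt (H : TDData d A B th a x v ε) (k : ℕ) :
    ∀ j ≤ d, k < j → ε j ((A ^ k) (v 0)) = 0 := by
  induction k with
  | zero =>
    intro j hj hk
    simp [H.dual j hj 0 (by omega), show j ≠ 0 by omega]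
  | succ k ih =>
    intro j hj hk
    obtain ⟨m, rfl⟩ : ∃ m, j = m + 1 := ⟨j - 1, by omega⟩
    rw [pow_succ', Module.End.mul_apply, H.epsA_succ m hj, ih m (by omega) (by omega),
      ih (m + 1) hj (by omega)]
    split_ifs with h
    · rw [ih (m + 2) h (by omega)]; simp
    · simp

theorem pow_eq (H : TDData d A B th a x v ε) (k : ℕ) (hk : k ≤ d) :
    ε k ((A ^ k) (v 0)) = 1 := by
  induction k with
  | zero => simp [H.dual 0 hk 0 hk]
  | succ k ih =>
    rw [pow_succ', Module.End.mul_apply, H.epsA_succ k hk, ih (by omega),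
      H.pow_gt k (k + 1) hk (by omega)]
    split_ifs with h
    · rw [H.pow_gt k (k + 2) h (by omega)]; simp
    · simp

theorem eps_aeval (j : ℕ) (f : K[X]) (A : V →ₗ[K] V) (ε : ℕ → V →ₗ[K] K) (w : V) :
    ε j (aeval A f w) = ∑ k ∈ Finset.range (f.natDegree + 1), f.coeff k * ε j ((A ^ k) w) := by
  rw [aeval_eq_sum_range]
  simp [LinearMap.sum_apply, map_sum]

theorem aeval_gt (H : TDData d A B th a x v ε) (f : K[X]) (j : ℕ) (hj : j ≤ d)
    (hf : f.natDegree < j) : ε j (aeval A f (v 0)) = 0 := by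
  rw [eps_aeval]
  refine Finset.sum_eq_zero fun k hk => ?_
  rw [Finset.mem_range] at hk
  rw [H.pow_gt k j hj (by omega), mul_zero]

theorem aeval_inj (H : TDData d A B th a x v ε) (f : K[X]) (hf : f.natDegree ≤ d)
    (h0 : aeval A f (v 0) = 0) : f = 0 := by
  have h := eps_aeval f.natDegree f A ε (v 0)
  rw [h0, map_zero, Finset.sum_range_succ, H.pow_eq _ hf, Finset.sum_eq_zero] at h
  · rw [← leadingCoeff_eq_zero, leadingCoeff]; simpa using h.symm
  · intro k hk
    rw [Finset.mem_range] at hk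
    rw [H.pow_gt k _ hf hk, mul_zero]

/-- The defining recurrence of the polynomials. -/
def IsRec (a x : ℕ → K) (p : ℕ → K[X]) : Prop :=
  p 0 = 1 ∧ p 1 = Polynomial.X - C (a 0) ∧
    ∀ n, p (n + 2) = (Polynomial.X - C (a (n + 1))) * p (n + 1) - C (x (n + 1)) * p n

theorem natDegree_p {p : ℕ → K[X]} (hp : IsRec a x p) (i : ℕ) :
    (p i).natDegree ≤ i ∧ (p (i + 1)).natDegree ≤ i + 1 := by
  induction i with
  | zero => rw [hp.1, hp.2.1]; simp
  | succ i ih =>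
    refine ⟨ih.2, ?_⟩
    rw [hp.2.2]
    refine (natDegree_sub_le _ _).trans (max_le ?_ ?_)
    · refine natDegree_mul_le.trans ?_
      rw [natDegree_X_sub_C]; omega
    · refine natDegree_mul_le.trans ?_
      rw [natDegree_C]; omega

theorem aeval_p (H : TDData d A B th a x v ε) {p : ℕ → K[X]} (hp : IsRec a x p) (i : ℕ) :
    (i ≤ d → aeval A (p i) (v 0) = v i) ∧ (i + 1 ≤ d → aeval A (p (i + 1)) (v 0) = v (i + 1)) := by
  induction i with
  | zero =>
    rw [hp.1, hp.2.1]
    refine ⟨fun _ => by simp, fun h => ?_⟩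
    have : A (v 0) = v 1 + a 0 • v 0 := by
      refine H.ext0 fun j hj => ?_
      rcases Nat.lt_or_ge 1 j with h1 | h1
      · rw [H.far j hj 0 (by omega) (by omega), map_add, map_smul, H.dual j hj 1 h,
          H.dual j hj 0 (by omega), if_neg (by omega), if_neg (by omega)]; simp
      · interval_cases j
        · rw [H.mid 0 hj, map_add, map_smul, H.dual _ hj 1 h, H.dual _ hj 0 (by omega)]; simp
        · rw [H.up 0 hj, map_add, map_smul, H.dual _ hj 1 h, H.dual _ hj 0 (by omega)]; simp
    simp [this, Module.algebraMap_end_apply]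
  | succ i ih =>
    refine ⟨ih.2, fun h => ?_⟩
    have e : A (v (i + 1)) = v (i + 2) + a (i + 1) • v (i + 1) + x (i + 1) • v i := by
      refine H.ext0 fun j hj => ?_
      rw [map_add, map_add, map_smul, map_smul, H.dual j hj _ h, H.dual j hj (i + 1) (by omega),
        H.dual j hj i (by omega)]
      by_cases h1 : j = i
      · subst h1; rw [H.down j (by omega), if_neg (by omega), if_neg (by omega)]; simp
      by_cases h2 : j = i + 1
      · subst h2; rw [H.mid _ hj]; simp
      by_cases h3 : j = i + 2
      · subst h3; rw [H.up _ hj]; simp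
      · rw [H.far j hj _ (by omega) (by omega)]; simp [h1, h2, h3]
    rw [hp.2.2]
    simp only [map_sub, map_mul, aeval_X, aeval_C, LinearMap.sub_apply, Module.End.mul_apply,
      Module.algebraMap_end_apply, ih.1 (by omega), ih.2 (by omega), e]
    abel

theorem core (H : TDData d A B th a x v ε) {p : ℕ → K[X]} (hp : IsRec a x p) (i : ℕ) (hi : i ≤ d)
    (f : K[X]) (hf : f.natDegree ≤ i)
    (h0 : ∃ c : K, aeval A f (v 0) = c • v i) : ∃ c : K, f = c • p i := by
  obtain ⟨c, hc⟩ := h0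
  refine ⟨c, ?_⟩
  rw [← sub_eq_zero]
  refine H.aeval_inj _ ?_ ?_
  · refine ((natDegree_sub_le _ _).trans (max_le hf ?_)).trans hi
    exact (natDegree_smul_le _ _).trans (natDegree_p hp i).1
  · simp [(H.aeval_p hp i).1 hi, hc]

theorem normalize {p f : K[X]} {z c : K} (h : f = c • p) (h1 : f.eval z = 1) :
    (p.eval z)⁻¹ • p = f := by
  rw [h, eval_smul, smul_eq_mul] at h1
  rw [h, eq_comm]
  congr 1
  exact eq_inv_of_mul_eq_one_left h1

theorem eigen_top (H : TDData d A B th a x v ε) (y : V) (θ : K) (hy : A y = θ • y) (h : ℕ)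
    (hd : h + 1 ≤ d) (h0 : ∀ j ≤ d, h < j → ε j y = 0) : y = 0 := by
  have key : ∀ n, ∀ j ≤ d, d ≤ n + j → ε j y = 0 := by
    intro n
    induction n with
    | zero => intro j hj hn; exact h0 j hj (by omega)
    | succ n ih =>
      intro j hj hn
      by_cases hjd : j = d
      · exact h0 j hj (by omega)
      have := H.epsA_succ j (by omega) y
      rw [hy, map_smul, ih (j + 1) (by omega) (by omega)] at this
      split_ifs at this with h2
      · rw [ih (j + 2) (by omega) (by omega)] at this
        simpa using this.symm
      · simpa using this.symm
  exact H.ext0 fun j hj => by rw [key d j hj (by omega), map_zero]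

theorem eigen_bot (H : TDData d A B th a x v ε) {p : ℕ → K[X]} (hp : IsRec a x p)
    (y : V) (θ : K) (hy : A y = θ • y) (i : ℕ) :
    (i ≤ d → (∏ l ∈ Finset.range i, x (l + 1)) * ε i y = ε 0 y * (p i).eval θ) ∧
    (i + 1 ≤ d → (∏ l ∈ Finset.range (i + 1), x (l + 1)) * ε (i + 1) y =
      ε 0 y * (p (i + 1)).eval θ) := by
  induction i with
  | zero =>
    rw [hp.1, hp.2.1]
    refine ⟨fun _ => by simp, fun h => ?_⟩
    have := H.epsA_zero y
    rw [hy, map_smul, if_pos (by omega), smul_eq_mul] at this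
    simp
    linear_combination -this
  | succ i ih =>
    refine ⟨ih.2, fun h => ?_⟩
    have := H.epsA_succ i (by omega) y
    rw [hy, map_smul, if_pos (by omega), smul_eq_mul] at this
    have e1 := ih.1 (by omega)
    have e2 := ih.2 (by omega)
    rw [hp.2.2, Finset.prod_range_succ]
    simp only [eval_sub, eval_mul, eval_X, eval_C]
    rw [Finset.prod_range_succ] at e2 ⊢
    linear_combination (-(∏ l ∈ Finset.range i, x (l + 1)) * x (i + 1)) * this
      + (θ - a (i + 1)) * e2 - x (i + 1) * e1

theorem eigen_zero (H : TDData d A B th a x v ε)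
    (y : V) (θ : K) (hy : A y = θ • y) (h0 : ε 0 y = 0) : y = 0 := by
  have key : ∀ i, (i ≤ d → ε i y = 0) ∧ (i + 1 ≤ d → ε (i + 1) y = 0) := by
    intro i
    induction i with
    | zero =>
      refine ⟨fun _ => h0, fun h => ?_⟩
      have := H.epsA_zero y
      rw [hy, map_smul, if_pos (by omega), smul_eq_mul, h0] at this
      simpa [H.xne 0 h] using this
    | succ i ih =>
      refine ⟨ih.2, fun h => ?_⟩
      have := H.epsA_succ i (by omega) y
      rw [hy, map_smul, if_pos (by omega), smul_eq_mul, ih.1 (by omega), ih.2 (by omega)] at this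
      simpa [H.xne (i + 1) h] using this
  exact H.ext0 fun j hj => by rw [(key j).1 hj, map_zero]

/-- The products `τ_h`. -/
def tau (θ : ℕ → K) (h : ℕ) : K[X] := ∏ l ∈ Finset.range h, (Polynomial.X - C (θ l))

theorem natDegree_tau (θ : ℕ → K) (h : ℕ) : (tau θ h).natDegree ≤ h := by
  unfold tau
  rw [natDegree_prod_of_monic _ _ fun l _ => monic_X_sub_C _]
  simp

theorem eval_tau (θ : ℕ → K) (h : ℕ) (z : K) :
    (tau θ h).eval z = ∏ l ∈ Finset.range h, (z - θ l) := by
  simp [tau, eval_prod]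

/-- The right hand side of the formula. -/
def fpoly (θ θs φ : ℕ → K) (i : ℕ) : K[X] :=
  ∑ h ∈ Finset.range (i + 1),
    ((∏ l ∈ Finset.range h, (θs i - θs l)) / ∏ l ∈ Finset.Icc 1 h, φ l) • tau θ h

theorem natDegree_fpoly (θ θs φ : ℕ → K) (i : ℕ) : (fpoly θ θs φ i).natDegree ≤ i := by
  unfold fpoly
  refine natDegree_sum_le_of_forall_le _ _ fun h hh => ?_
  rw [Finset.mem_range] at hh
  exact ((natDegree_smul_le _ _).trans (natDegree_tau θ h)).trans (by omega)

theorem eval_fpoly_zero (θ θs φ : ℕ → K) (i : ℕ) : (fpoly θ θs φ i).eval (θ 0) = 1 := by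
  unfold fpoly
  rw [eval_finsetSum, Finset.sum_eq_single 0]
  · simp [tau]
  · intro h _ hh
    have h0 : ∏ l ∈ Finset.range h, (θ 0 - θ l) = 0 :=
      Finset.prod_eq_zero (i := 0) (Finset.mem_range.2 (Nat.pos_of_ne_zero hh)) (sub_self _)
    rw [eval_smul, eval_tau, h0, smul_zero]
  · simp

/-- The formula may be summed up to any larger bound. -/
theorem eval_fpoly (θ θs φ : ℕ → K) (i d : ℕ) (hi : i ≤ d) (z : K) :
    (fpoly θ θs φ i).eval z = ∑ h ∈ Finset.range (d + 1),
    ((∏ l ∈ Finset.range h, (θs i - θs l)) / ∏ l ∈ Finset.Icc 1 h, φ l) *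
      ∏ l ∈ Finset.range h, (z - θ l) := by
  unfold fpoly
  rw [eval_finsetSum]
  simp only [eval_smul, eval_tau, smul_eq_mul]
  refine Finset.sum_subset (by intro k; simp; omega) ?_
  intro h _ hh
  rw [Finset.mem_range, not_lt] at hh
  rw [Finset.prod_eq_zero (i := i) (by simp; omega) (by simp)]; simp

theorem fpoly_symm (θ θs φ : ℕ → K) (i j d : ℕ) (hi : i ≤ d) (hj : j ≤ d) :
    (fpoly θ θs φ i).eval (θ j) = (fpoly θs θ φ j).eval (θs i) := by
  rw [eval_fpoly _ _ _ _ d hi, eval_fpoly _ _ _ _ d hj]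
  refine Finset.sum_congr rfl fun h _ => ?_
  ring

theorem part1 (H : TDData d A B th a x v ε) {p : ℕ → K[X]} (hp : IsRec a x p)
    (hth : ∀ i ≤ d, ∀ j ≤ d, th i = th j → i = j) (θ φ : ℕ → K)
    (hφ0 : ∀ i, i + 1 ≤ d → φ (i + 1) ≠ 0)
    (hφ : ∀ i, i + 1 ≤ d → ∀ s, s = aeval A (tau θ (i + 1)) (v 0) →
      A (B s - th (i + 1) • s) - θ i • (B s - th (i + 1) • s) = φ (i + 1) • s)
    (i : ℕ) (hi : i ≤ d) : ((p i).eval (θ 0))⁻¹ • p i = fpoly θ th φ i := by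
  set s : ℕ → V := fun h => aeval A (tau θ h) (v 0) with hs
  have step : ∀ h, h + 1 ≤ d → B (s (h + 1)) = th (h + 1) • s (h + 1) + φ (h + 1) • s h := by
    intro h hh
    have e := hφ h hh (s (h + 1)) rfl
    have e2 : s (h + 1) = A (s h) - θ h • s h := by
      simp only [hs, tau, Finset.prod_range_succ]
      rw [mul_comm]
      simp [Module.algebraMap_end_apply]
    have e3 : B (s (h + 1)) - th (h + 1) • s (h + 1) - φ (h + 1) • s h = 0 := by
      refine H.eigen_top _ (θ h) ?_ h hh ?_
      · rw [map_sub, map_smul A]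
        have e4 : A (B (s (h + 1)) - th (h + 1) • s (h + 1)) =
          θ h • (B (s (h + 1)) - th (h + 1) • s (h + 1)) + φ (h + 1) • s (h + 1) := by
          rw [← e]; abel
        have e5 : A (s h) = s (h + 1) + θ h • s h := by rw [e2]; abel
        rw [e4, e5]
        simp only [smul_sub, smul_add, smul_comm (θ h) (φ (h + 1))]
        abel
      · intro j hj hhj
        have z1 : ε j (s h) = 0 := H.aeval_gt _ j hj (lt_of_le_of_lt (natDegree_tau θ h) hhj)
        rw [map_sub, map_sub, map_smul, map_smul, H.epsB j hj, z1]
        by_cases hjh : j = h + 1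
        · subst hjh; simp
        · have z2 : ε j (s (h + 1)) = 0 :=
            H.aeval_gt _ j hj (lt_of_le_of_lt (natDegree_tau θ (h + 1)) (by omega))
          rw [z2]; simp
    rw [sub_sub, sub_eq_zero] at e3
    exact e3
  have hs0 : B (s 0) = th 0 • s 0 := by
    simp only [hs, tau, Finset.range_zero, Finset.prod_empty, map_one, Module.End.one_apply]
    exact H.diag 0 (by omega)
  set c : ℕ → K := fun h => (∏ l ∈ Finset.range h, (th i - th l)) / ∏ l ∈ Finset.Icc 1 h, φ l with hc
  have hcs : ∀ h, h + 1 ≤ d → c (h + 1) * φ (h + 1) = c h * (th i - th h) := by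
    intro h hh
    simp only [hc]
    rw [Finset.prod_range_succ, Finset.prod_Icc_succ_top (by omega)]
    have := hφ0 h hh
    have hP : ∏ l ∈ Finset.Icc 1 h, φ l ≠ 0 := by
      rw [Finset.prod_ne_zero_iff]
      intro l hl
      rw [Finset.mem_Icc] at hl
      obtain ⟨m, rfl⟩ : ∃ m, l = m + 1 := ⟨l - 1, by omega⟩
      exact hφ0 m (by omega)
    field_simp
  have hf : aeval A (fpoly θ th φ i) (v 0) = ∑ h ∈ Finset.range (i + 1), c h • s h := by
    simp [fpoly, hs, hc, map_sum, LinearMap.sum_apply]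
  have part : ∀ n ≤ d, B (∑ h ∈ Finset.range (n + 1), c h • s h) =
      th i • (∑ h ∈ Finset.range (n + 1), c h • s h) - (c n * (th i - th n)) • s n := by
    intro n
    induction n with
    | zero =>
      intro _
      simp only [zero_add, Finset.sum_range_one, map_smul, hs0, smul_smul, ← sub_smul]
      congr 1; ring
    | succ n ih =>
      intro hn
      rw [Finset.sum_range_succ, map_add, ih (by omega), map_smul, step n hn, ← hcs n hn]
      module
  have hB : B (aeval A (fpoly θ th φ i) (v 0)) = th i • aeval A (fpoly θ th φ i) (v 0) := by
    rw [hf, part i hi]; simp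
  obtain ⟨k, hk⟩ := H.core hp i hi (fpoly θ th φ i) (natDegree_fpoly _ _ _ _)
    ⟨ε i (aeval A (fpoly θ th φ i) (v 0)), by
      refine H.ext0 fun j hj => ?_
      rw [map_smul, H.dual j hj i hi]
      by_cases hji : j = i
      · subst hji; simp
      · have := H.epsB j hj (aeval A (fpoly θ th φ i) (v 0))
        rw [hB, map_smul, smul_eq_mul, ← sub_eq_zero, ← sub_mul, mul_eq_zero] at this
        rcases this with h | h
        · exact absurd (hth i hi j hj (sub_eq_zero.1 h)).symm hji
        · rw [h, if_neg hji]; simp⟩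
  exact normalize hk (eval_fpoly_zero _ _ _ _)

theorem aeval_eps (H : TDData d A B th a x v ε) (f : K[X]) (y : V) (j : ℕ) (hj : j ≤ d) :
    ε j (aeval B f y) = f.eval (th j) * ε j y := by
  have hpow : ∀ k, ε j ((B ^ k) y) = th j ^ k * ε j y := by
    intro k
    induction k with
    | zero => simp
    | succ k ih => rw [pow_succ', Module.End.mul_apply, H.epsB j hj, ih]; ring
  rw [eps_aeval, eval_eq_sum_range, Finset.sum_mul]
  exact Finset.sum_congr rfl fun k _ => by rw [hpow]; ring

theorem part2 (H : TDData d A B th a x v ε) {p : ℕ → K[X]} (hp : IsRec a x p)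
    {θ as xs : ℕ → K} {w : ℕ → V} {η : ℕ → V →ₗ[K] K}
    (Hs : TDData d B A θ as xs w η) {ps : ℕ → K[X]} (hps : IsRec as xs ps) (φ : ℕ → K)
    (h1 : ∀ i ≤ d, ((p i).eval (θ 0))⁻¹ • p i = fpoly θ th φ i)
    (j : ℕ) (hj : j ≤ d) : ((ps j).eval (th 0))⁻¹ • ps j = fpoly th θ φ j := by
  have hw : ∀ k ≤ d, w k ≠ 0 := by
    intro k hk h
    have := Hs.dual k hk k hk
    rw [h] at this; simp at this
  have hw0 : ∀ k ≤ d, ε 0 (w k) ≠ 0 := fun k hk h =>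
    hw k hk (H.eigen_zero (w k) (θ k) (Hs.diag k hk) h)
  have hne := hw0 j hj
  have hne0 := hw0 0 (by omega)
  obtain ⟨c, hc⟩ := Hs.core hps j hj (fpoly th θ φ j) (natDegree_fpoly _ _ _ _)
    ⟨ε 0 (w 0) / ε 0 (w j), by
      refine H.ext0 fun i hi => ?_
      rw [H.aeval_eps _ _ _ hi, ← fpoly_symm θ th φ i j d hi hj, ← h1 i hi, map_smul, eval_smul,
        smul_eq_mul, smul_eq_mul]
      have e0 := (H.eigen_bot hp (w 0) (θ 0) (Hs.diag 0 (by omega)) i).1 hi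
      have e1 := (H.eigen_bot hp (w j) (θ j) (Hs.diag j hj) i).1 hi
      have hpne : (p i).eval (θ 0) ≠ 0 := by
        intro h
        have := eval_fpoly_zero θ th φ i
        rw [← h1 i hi, h] at this
        simp at this
      have hP : ∏ l ∈ Finset.range i, x (l + 1) ≠ 0 := by
        rw [Finset.prod_ne_zero_iff]
        intro l hl
        rw [Finset.mem_range] at hl
        exact H.xne l (by omega)
      field_simp
      refine mul_left_cancel₀ hP ?_
      linear_combination (p i).eval (θ j) * ε 0 (w j) * e0 - ε 0 (w 0) * (p i).eval (θ 0) * e1⟩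
  exact normalize hc (eval_fpoly_zero _ _ _ _)

end TDData

end LeonardCore

section HalfLemma

variable {K V : Type*} [Field K] [AddCommGroup V] [Module K V]

theorem exists_functional {F : V →ₗ[K] V} {e : V} (he : e ≠ 0) (h : ∀ y, ∃ c : K, F y = c • e) :
    ∃ η : V →ₗ[K] K, ∀ y, F y = η y • e := by
  choose c hc using h
  refine ⟨{ toFun := c, map_add' := ?_, map_smul' := ?_ }, hc⟩
  · intro y z
    refine smul_left_injective K he ?_
    simp only [add_smul, ← hc, map_add]
  · intro k y
    refine smul_left_injective K he ?_
    simp only [RingHom.id_apply, smul_eq_mul, mul_smul, ← hc, map_smul]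

theorem exists_TDData [FiniteDimensional K V] (d : ℕ) (A B : V →ₗ[K] V) (th : ℕ → K)
    (F : ℕ → V →ₗ[K] V) (e : ℕ → V)
    (hF : ∀ i ≤ d, ∀ j ≤ d, ∀ y, i ≠ j → F i (F j y) = 0)
    (hsum : ∀ y, y = ∑ i ∈ Finset.range (d + 1), F i y)
    (he0 : ∀ i ≤ d, e i ≠ 0) (hFe : ∀ i ≤ d, F i (e i) = e i)
    (hspan : ∀ i ≤ d, ∀ y, ∃ c : K, F i y = c • e i)
    (hB : ∀ i ≤ d, ∀ y, B (F i y) = th i • F i y)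
    (htri : ∀ i ≤ d, ∀ j ≤ d, (i + 1 < j ∨ j + 1 < i) → ∀ y, F i (A (F j y)) = 0)
    (hirr : ∀ U : Submodule K V, (∀ u ∈ U, A u ∈ U) → (∀ u ∈ U, B u ∈ U) → U = ⊥ ∨ U = ⊤)
    (a x : ℕ → K) (ha : ∀ i ≤ d, a i = LinearMap.trace K V (F i ∘ₗ A))
    (hx : ∀ i, i + 1 ≤ d →
      x (i + 1) = LinearMap.trace K V (F (i + 1) ∘ₗ A ∘ₗ F i ∘ₗ A)) :
    ∃ (v : ℕ → V) (ε : ℕ → V →ₗ[K] K), TDData d A B th a x v ε ∧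
      (∃ k : K, k ≠ 0 ∧ v 0 = k • e 0) := by
  have h1 : ∀ i, ∃ η : V →ₗ[K] K, i ≤ d → ∀ y, F i y = η y • e i := by
    intro i
    by_cases hi : i ≤ d
    · obtain ⟨η, hη⟩ := exists_functional (he0 i hi) (hspan i hi)
      exact ⟨η, fun _ => hη⟩
    · exact ⟨0, fun h => absurd h hi⟩
  choose η hη using h1
  have dual : ∀ i ≤ d, ∀ j ≤ d, η i (e j) = if i = j then 1 else 0 := by
    intro i hi j hj
    refine smul_left_injective K (he0 i hi) ?_
    simp only
    rw [← hη i hi]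
    split_ifs with h
    · subst h; rw [hFe i hi, one_smul]
    · rw [← hFe j hj, hF i hi j hj _ h, zero_smul]
  have expand : ∀ y, y = ∑ i ∈ Finset.range (d + 1), η i y • e i := by
    intro y
    conv_lhs => rw [hsum y]
    exact Finset.sum_congr rfl fun i hi => hη i (by simpa [Nat.lt_succ_iff] using hi) y
  have diag : ∀ i ≤ d, B (e i) = th i • e i := by
    intro i hi
    have := hB i hi (e i)
    rwa [hFe i hi] at this
  have far : ∀ i ≤ d, ∀ j ≤ d, (i + 1 < j ∨ j + 1 < i) → η i (A (e j)) = 0 := by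
    intro i hi j hj h
    have := htri i hi j hj h (e j)
    rw [hFe j hj, hη i hi] at this
    simpa [he0 i hi] using this
  have block : ∀ P : ℕ → Prop, (∀ j ≤ d, ∀ k ≤ d, P j → ¬ P k → η j (A (e k)) = 0) →
      ∀ j ≤ d, ∀ k ≤ d, P j → ¬ P k → False := by
    intro P hP j hj k hk hPj hPk
    let U : Submodule K V :=
      { carrier := {y | ∀ l ≤ d, P l → η l y = 0}
        add_mem' := by
          intro y z hy hz l hl hp
          rw [map_add, hy l hl hp, hz l hl hp, add_zero]
        zero_mem' := by intro l _ _; simp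
        smul_mem' := by
          intro c y hy l hl hp
          rw [map_smul, hy l hl hp, smul_zero] }
    have hU : U = ⊥ ∨ U = ⊤ := by
      refine hirr U ?_ ?_
      · intro u hu l hl hp
        rw [expand u]
        simp only [map_sum, map_smul]
        refine Finset.sum_eq_zero fun m hm => ?_
        have hm' : m ≤ d := by simpa [Nat.lt_succ_iff] using hm
        by_cases hpm : P m
        · rw [hu m hm' hpm, zero_smul]
        · rw [hP l hl m hm' hp hpm, smul_zero]
      · intro u hu l hl hp
        rw [expand u]
        simp only [map_sum, map_smul]
        refine Finset.sum_eq_zero fun m hm => ?_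
        have hm' : m ≤ d := by simpa [Nat.lt_succ_iff] using hm
        by_cases hpm : P m
        · rw [hu m hm' hpm, zero_smul]
        · rw [diag m hm', map_smul, dual l hl m hm', if_neg (by rintro rfl; exact hpm hp)]
          simp
    rcases hU with hU | hU
    · have : e k ∈ U := by
        intro l hl hp
        rw [dual l hl k hk, if_neg (by rintro rfl; exact hPk hp)]
      rw [hU, Submodule.mem_bot] at this
      exact he0 k hk this
    · have : e j ∈ U := by rw [hU]; trivial
      have := this j hj hPj
      rw [dual j hj j hj] at this
      simp at this
  have bne : ∀ i, i + 1 ≤ d → η (i + 1) (A (e i)) ≠ 0 := by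
    intro i hi h
    refine block (fun j => i < j) ?_ (i + 1) hi i (by omega) (by simp) (by simp)
    intro j hj k hk hjp hkp
    by_cases hc : j = i + 1 ∧ k = i
    · rw [hc.1, hc.2, h]
    · exact far j hj k hk (by omega)
  have cne : ∀ i, i + 1 ≤ d → η i (A (e (i + 1))) ≠ 0 := by
    intro i hi h
    refine block (fun j => j ≤ i) ?_ i (by omega) (i + 1) hi (by simp) (by simp)
    intro j hj k hk hjp hkp
    by_cases hc : j = i ∧ k = i + 1
    · rw [hc.1, hc.2, h]
    · exact far j hj k hk (by omega)
  have tra : ∀ i ≤ d, a i = η i (A (e i)) := by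
    intro i hi
    have : F i ∘ₗ A = (η i ∘ₗ A).smulRight (e i) := by
      ext y; simp [hη i hi]
    rw [ha i hi, this, LinearMap.trace_smulRight]; rfl
  have trx : ∀ i, i + 1 ≤ d → x (i + 1) = η i (A (e (i + 1))) * η (i + 1) (A (e i)) := by
    intro i hi
    have : F (i + 1) ∘ₗ A ∘ₗ F i ∘ₗ A =
        (η (i + 1) (A (e i)) • (η i ∘ₗ A)).smulRight (e (i + 1)) := by
      ext y
      simp only [LinearMap.comp_apply, LinearMap.smulRight_apply, LinearMap.smul_apply,
        hη i (by omega), hη (i + 1) hi, map_smul, smul_eq_mul, mul_smul]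
      rw [smul_comm]
    rw [hx i hi, this, LinearMap.trace_smulRight]
    simp [mul_comm]
  let b : ℕ → K := fun i => ∏ l ∈ Finset.range i, η (l + 1) (A (e l))
  have bn : ∀ i ≤ d, b i ≠ 0 := by
    intro i hi
    rw [Finset.prod_ne_zero_iff]
    intro l hl
    rw [Finset.mem_range] at hl
    exact bne l (by omega)
  have bs : ∀ i, b (i + 1) = b i * η (i + 1) (A (e i)) := fun i => Finset.prod_range_succ _ _
  refine ⟨fun i => b i • e i, fun i => (b i)⁻¹ • η i, ?_, 1, one_ne_zero, by simp [b]⟩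
  constructor
  · intro i hi j hj
    simp only [LinearMap.smul_apply, map_smul, dual i hi j hj, smul_eq_mul]
    split_ifs with h
    · subst h; have := bn i hi; field_simp
    · simp
  · intro y
    conv_lhs => rw [expand y]
    refine Finset.sum_congr rfl fun i hi => ?_
    have := bn i (by simpa [Nat.lt_succ_iff] using hi)
    rw [smul_smul, LinearMap.smul_apply, smul_eq_mul, mul_right_comm, inv_mul_cancel₀ this, one_mul]
  · intro i hi
    simp only [map_smul, diag i hi]
    rw [smul_comm]
  · intro i hi
    simp only [LinearMap.smul_apply, map_smul, smul_eq_mul]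
    have h2 := bn (i + 1) hi
    rw [bs] at h2 ⊢
    have h3 := bne i hi
    have h4 := bn i (by omega)
    field_simp
  · intro i hi
    simp only [LinearMap.smul_apply, map_smul, smul_eq_mul, tra i hi]
    have h4 := bn i (by omega)
    field_simp
  · intro i hi
    simp only [LinearMap.smul_apply, map_smul, smul_eq_mul, trx i hi, bs]
    have h4 := bn i (by omega)
    field_simp
  · intro i hi j hj h
    simp only [LinearMap.smul_apply, map_smul, smul_eq_mul, far i hi j hj h, mul_zero]
  · intro i hi
    rw [trx i hi]
    exact mul_ne_zero (cne i hi) (bne i hi)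

end HalfLemma

section Concrete

theorem spec_mul {D : ℕ} {A : Matrix X X ℂ} {E : ℕ → Matrix X X ℂ} {θ : ℕ → ℂ}
    (hidem : ∀ i j : ℕ, i ≤ D → j ≤ D → E i * E j = if i = j then E i else 0)
    (hspec : A = ∑ i ∈ Finset.range (D + 1), θ i • E i) (i : ℕ) (hi : i ≤ D) :
    A * E i = θ i • E i := by
  rw [hspec, Finset.sum_mul, Finset.sum_eq_single i]
  · rw [Matrix.smul_mul, hidem i i hi hi, if_pos rfl]
  · intro j hj hji
    rw [Matrix.smul_mul, hidem j i (by simpa [Nat.lt_succ_iff] using hj) hi, if_neg hji, smul_zero]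
  · intro h; exact absurd (Finset.mem_range.2 (by omega)) h

theorem spec_mem {D : ℕ} {A : Matrix X X ℂ} {E : ℕ → Matrix X X ℂ} {θ : ℕ → ℂ}
    (hsum : ∑ i ∈ Finset.range (D + 1), E i = 1)
    (hidem : ∀ i j : ℕ, i ≤ D → j ≤ D → E i * E j = if i = j then E i else 0)
    (hinj : ∀ i j : ℕ, i ≤ D → j ≤ D → θ i = θ j → i = j)
    (hspec : A = ∑ i ∈ Finset.range (D + 1), θ i • E i) (i : ℕ) (hi : i ≤ D) :
    E i ∈ Algebra.adjoin ℂ {A} := by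
  have hpow : ∀ j ≤ D, ∀ k : ℕ, A ^ k * E j = θ j ^ k • E j := by
    intro j hj k
    induction k with
    | zero => simp
    | succ k ih =>
      rw [pow_succ, mul_assoc, spec_mul hidem hspec j hj, Matrix.mul_smul, ih, smul_smul, pow_succ]
      rw [mul_comm]
  have hq : ∀ j ≤ D, ∀ q : Polynomial ℂ, Polynomial.aeval A q * E j = q.eval (θ j) • E j := by
    intro j hj q
    rw [Polynomial.aeval_eq_sum_range, Polynomial.eval_eq_sum_range, Finset.sum_mul,
      Finset.sum_smul]
    refine Finset.sum_congr rfl fun k _ => ?_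
    rw [Matrix.smul_mul, hpow j hj, smul_smul]
  have hinj' : Set.InjOn θ (Finset.range (D + 1) : Set ℕ) := by
    intro a ha b hb h
    simp only [Finset.coe_range, Set.mem_Iio] at ha hb
    exact hinj a b (by omega) (by omega) h
  have hE : Polynomial.aeval A (Lagrange.basis (Finset.range (D + 1)) θ i) = E i := by
    rw [← mul_one (Polynomial.aeval A _), ← hsum, Finset.mul_sum, Finset.sum_eq_single i]
    · rw [hq i hi, Lagrange.eval_basis_self hinj' (Finset.mem_range.2 (by omega)), one_smul]
    · intro j hj hji
      rw [hq j (by simpa [Nat.lt_succ_iff] using hj),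
        Lagrange.eval_basis_of_ne hji.symm hj, zero_smul]
    · intro h; exact absurd (Finset.mem_range.2 (by omega)) h
  rw [← hE]
  exact Polynomial.aeval_mem_adjoin_singleton ℂ A

variable (S : TSetup X)

theorem A_mem : S.A ∈ S.T := Algebra.subset_adjoin (by simp)

theorem Astar_mem : S.Astar ∈ S.T := Algebra.subset_adjoin (by simp)

theorem E_mem (i : ℕ) : S.E i ∈ S.T := by
  by_cases hi : i ≤ S.D
  · have := spec_mem (θ := fun i => (S.θ i : ℂ)) S.hEsum S.hEidem
      (fun i j hi hj h => S.hθinj i j hi hj (by exact_mod_cast h)) S.hAspec i hi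
    exact Algebra.adjoin_mono (by simp) this
  · rw [S.hEzero i (by omega)]; exact zero_mem _

theorem Estar_eq (i : ℕ) (hi : i ≤ S.D) :
    S.Estar i = Matrix.diagonal (fun y => if S.G.dist S.x y = i then (1 : ℂ) else 0) := by
  ext y z
  rw [S.hEstar i hi, Matrix.diagonal_apply]
  by_cases h : y = z <;> simp [h]

theorem Estar_idem (i j : ℕ) (hi : i ≤ S.D) (hj : j ≤ S.D) :
    S.Estar i * S.Estar j = if i = j then S.Estar i else 0 := by
  rw [Estar_eq S i hi, Estar_eq S j hj, Matrix.diagonal_mul_diagonal]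
  split_ifs with h
  · subst h; congr 1; ext y; split_ifs <;> simp
  · rw [← Matrix.diagonal_zero]; congr 1; ext y
    split_ifs with h1 h2
    · exact absurd (h1.symm.trans h2) h
    all_goals simp

theorem Estar_sum : ∑ i ∈ Finset.range (S.D + 1), S.Estar i = 1 := by
  ext y z
  rw [Matrix.sum_apply]
  have : ∀ i ∈ Finset.range (S.D + 1), S.Estar i y z =
      if i = S.G.dist S.x y then (1 : Matrix X X ℂ) y z else 0 := by
    intro i hi
    rw [S.hEstar i (by simpa [Nat.lt_succ_iff] using hi), Matrix.one_apply]
    by_cases h : y = z <;> simp [h, eq_comm]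
  rw [Finset.sum_congr rfl this, Finset.sum_ite_eq', if_pos]
  have := S.hDiamLe S.x y
  simp; omega

theorem Estar_mem (i : ℕ) : S.Estar i ∈ S.T := by
  by_cases hi : i ≤ S.D
  · have := spec_mem (θ := fun i => (S.θstar i : ℂ)) (Estar_sum S) (Estar_idem S)
      (fun i j hi hj h => S.hθstarinj i j hi hj (by exact_mod_cast h)) S.hAstarspec i hi
    exact Algebra.adjoin_mono (by simp) this
  · rw [S.hEstarzero i (by omega)]; exact zero_mem _

theorem Estar_tri (i j : ℕ) (h : i + 1 < j ∨ j + 1 < i) : S.Estar i * S.A * S.Estar j = 0 := by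
  by_cases hi : i ≤ S.D
  swap
  · rw [S.hEstarzero i (by omega)]; simp
  by_cases hj : j ≤ S.D
  swap
  · rw [S.hEstarzero j (by omega)]; simp
  rw [Estar_eq S i hi, Estar_eq S j hj]
  ext y z
  rw [Matrix.mul_diagonal, Matrix.diagonal_mul, S.hA]
  by_cases hy : S.G.dist S.x y = i
  swap
  · simp [hy]
  by_cases hz : S.G.dist S.x z = j
  swap
  · simp [hz]
  by_cases hyz : S.G.Adj y z
  swap
  · simp [hyz]
  exfalso
  have h1 : S.G.dist y z = 1 := SimpleGraph.dist_eq_one_iff_adj.2 hyz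
  have h2 := S.hGconn.dist_triangle (u := S.x) (v := y) (w := z)
  have h3 := S.hGconn.dist_triangle (u := S.x) (v := z) (w := y)
  rw [SimpleGraph.dist_comm (u := z)] at h3
  omega

theorem Astar_eq : S.Astar =
    Matrix.diagonal (fun y => (Fintype.card X : ℂ) * S.E 1 S.x y) := by
  ext y z
  rw [S.hAstar, Matrix.diagonal_apply]

open scoped ComplexOrder in
theorem E_tri (i j : ℕ) (h : i + 1 < j ∨ j + 1 < i) : S.E i * S.Astar * S.E j = 0 := by
  by_cases hi : i ≤ S.D
  swap
  · rw [S.hEzero i (by omega)]; simp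
  by_cases hj : j ≤ S.D
  swap
  · rw [S.hEzero j (by omega)]; simp
  have h1D : 1 ≤ S.D := by have := S.hD3; omega
  have hstar : ∀ k y z, star (S.E k y z) = S.E k y z := by
    intro k y z
    exact congrFun (congrFun (S.hEreal k) y) z
  have hsym : ∀ k y z, S.E k y z = S.E k z y := by
    intro k y z
    exact congrFun (congrFun (S.hEsymm k) z) y
  have hEH : ∀ k, (S.E k)ᴴ = S.E k := by
    intro k; ext y z
    rw [Matrix.conjTranspose_apply, hstar, hsym]
  have hAH : (S.Astar)ᴴ = S.Astar := by
    rw [Astar_eq, Matrix.diagonal_conjTranspose]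
    congr 1; ext y
    simp only [Pi.star_apply, star_mul', hstar]
    simp
  rw [← Matrix.trace_mul_conjTranspose_self_eq_zero_iff]
  rw [Matrix.conjTranspose_mul, Matrix.conjTranspose_mul, hEH, hEH, hAH]
  have e1 : S.E i * S.Astar * S.E j * (S.E j * (S.Astar * S.E i)) =
      (S.E i * S.Astar * S.E j * S.Astar) * S.E i := by
    have := S.hEidem j j hj hj
    rw [if_pos rfl] at this
    rw [← mul_assoc, mul_assoc _ (S.E j) (S.E j), this]
    simp only [mul_assoc]
  rw [e1, Matrix.trace_mul_comm]
  have e2 : S.E i * (S.E i * S.Astar * S.E j * S.Astar) = S.E i * S.Astar * S.E j * S.Astar := by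
    have := S.hEidem i i hi hi
    rw [if_pos rfl] at this
    simp only [← mul_assoc, this]
  rw [e2]
  have e3 : S.E 1 * Matrix.hadamard (S.E i) (S.E j) = 0 := by
    rw [S.hKrein i j hi hj, Matrix.mul_smul, Finset.mul_sum, Finset.sum_eq_zero, smul_zero]
    intro k hk
    have hk' : k ≤ S.D := by simpa [Nat.lt_succ_iff] using hk
    rw [Matrix.mul_smul, S.hEidem 1 k h1D hk']
    split_ifs with h1
    · subst h1
      rw [S.hQpoly0 1 i j h1D hi hj (by omega)]; simp
    · simp
  have e4 : Matrix.trace (S.E i * S.Astar * S.E j * S.Astar) =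
      (Fintype.card X : ℂ) ^ 2 *
        ((S.E 1 * Matrix.hadamard (S.E i) (S.E j)) * S.E 1) S.x S.x := by
    rw [Astar_eq, Matrix.trace]
    have e5 : ∀ (f : X → ℂ) (y : X), (S.E i * Matrix.diagonal f * S.E j * Matrix.diagonal f) y y =
        ∑ z, S.E i y z * f z * S.E j z y * f y := by
      intro f y
      rw [Matrix.mul_diagonal, Matrix.mul_apply, Finset.sum_mul]
      simp only [Matrix.mul_diagonal]
    simp only [Matrix.diag_apply, e5]
    simp only [Matrix.mul_apply, Matrix.hadamard_apply, Finset.sum_mul, Finset.mul_sum]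
    rw [Finset.sum_comm]
    refine Finset.sum_congr rfl fun z _ => Finset.sum_congr rfl fun y _ => ?_
    rw [hsym 1 z S.x, hsym j z y]
    ring
  rw [e4, e3]; simp

variable {S} (M : TMod S)

theorem act_apply {B : Matrix X X ℂ} (hB : B ∈ S.T) (w : M.W) :
    ((actW S M B w : M.W) : X → ℂ) = B *ᵥ (w : X → ℂ) := by
  have h : ∀ w ∈ M.W, B.mulVecLin w ∈ M.W := fun w hw => M.hWinv B hB w hw
  rw [actW, dif_pos h]; rfl

theorem act_mul {B C : Matrix X X ℂ} (hB : B ∈ S.T) (hC : C ∈ S.T) :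
    actW S M (B * C) = actW S M B ∘ₗ actW S M C := by
  refine LinearMap.ext fun w => Subtype.ext ?_
  rw [act_apply M (mul_mem hB hC), LinearMap.comp_apply, act_apply M hB, act_apply M hC,
    Matrix.mulVec_mulVec]

theorem act_aeval {B : Matrix X X ℂ} (hB : B ∈ S.T) (f : Polynomial ℂ) (w : M.W) :
    ((Polynomial.aeval (actW S M B) f w : M.W) : X → ℂ) =
      (Polynomial.aeval B f) *ᵥ (w : X → ℂ) := by
  have hpow : ∀ k : ℕ, (((actW S M B ^ k) w : M.W) : X → ℂ) = B ^ k *ᵥ (w : X → ℂ) := by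
    intro k
    induction k with
    | zero => simp
    | succ k ih =>
      rw [pow_succ', Module.End.mul_apply, act_apply M hB, ih, Matrix.mulVec_mulVec, pow_succ']
  rw [Polynomial.aeval_eq_sum_range, Polynomial.aeval_eq_sum_range, Matrix.sum_mulVec]
  simp [LinearMap.sum_apply, hpow, Matrix.smul_mulVec]

theorem act_irr (U : Submodule ℂ M.W) (hA : ∀ u ∈ U, actW S M S.A u ∈ U)
    (hB : ∀ u ∈ U, actW S M S.Astar u ∈ U) : U = ⊥ ∨ U = ⊤ := by
  have key : ∀ B ∈ S.T, ∀ u ∈ U, actW S M B u ∈ U := by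
    intro B hB'
    refine Algebra.adjoin_induction (p := fun B _ => ∀ u ∈ U, actW S M B u ∈ U)
      ?_ ?_ ?_ ?_ hB'
    · intro C hC
      simp only [Set.mem_insert_iff, Set.mem_singleton_iff] at hC
      rcases hC with rfl | rfl
      · exact hA
      · exact hB
    · intro c u hu
      have : actW S M (algebraMap ℂ (Matrix X X ℂ) c) u = c • u := by
        apply Subtype.ext
        rw [act_apply M (Subalgebra.algebraMap_mem _ c), Algebra.algebraMap_eq_smul_one,
          Matrix.smul_mulVec, Matrix.one_mulVec]; rfl
      rw [this]; exact U.smul_mem c hu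
    · intro C C' hC hC' h h' u hu
      have : actW S M (C + C') u = actW S M C u + actW S M C' u := by
        apply Subtype.ext
        rw [act_apply M (add_mem hC hC'), Matrix.add_mulVec, Submodule.coe_add, act_apply M hC,
          act_apply M hC']
      rw [this]; exact U.add_mem (h u hu) (h' u hu)
    · intro C C' hC hC' h h' u hu
      rw [act_mul M hC hC']
      exact h _ (h' u hu)
  have h := M.hWirr (U.map M.W.subtype) (Submodule.map_subtype_le _ _) (by
    rintro B hB' _ ⟨u, hu, rfl⟩
    exact ⟨actW S M B u, key B hB' u hu, act_apply M hB' u⟩)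
  rcases h with h | h
  · left
    refine Submodule.map_injective_of_injective M.W.injective_subtype ?_
    rw [h, Submodule.map_bot]
  · right
    refine Submodule.map_injective_of_injective M.W.injective_subtype ?_
    rw [h, Submodule.map_subtype_top]

/-- Common facts on the family `F i = E (r + i)` acting on `W`. -/
theorem family_facts (E : ℕ → Matrix X X ℂ) (B C : Matrix X X ℂ) (θ : ℕ → ℂ) (r d : ℕ)
    (hET : ∀ i, E i ∈ S.T) (hBT : B ∈ S.T) (hCT : C ∈ S.T)
    (hEzero : ∀ i : ℕ, S.D < i → E i = 0)
    (hsum : ∑ i ∈ Finset.range (S.D + 1), E i = 1)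
    (hidem : ∀ i j : ℕ, i ≤ S.D → j ≤ S.D → E i * E j = if i = j then E i else 0)
    (hspec : B = ∑ i ∈ Finset.range (S.D + 1), θ i • E i)
    (htri : ∀ i j : ℕ, (i + 1 < j ∨ j + 1 < i) → E i * C * E j = 0)
    (hr : ∀ i : ℕ, M.W.map (E i).mulVecLin ≠ ⊥ ↔ r ≤ i ∧ i ≤ r + d) :
    r + d ≤ S.D ∧
    (∀ i ≤ d, ∀ j ≤ d, ∀ y, i ≠ j → actW S M (E (r + i)) (actW S M (E (r + j)) y) = 0) ∧
    (∀ y, y = ∑ i ∈ Finset.range (d + 1), actW S M (E (r + i)) y) ∧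
    (∃ e : ℕ → M.W, ∀ i ≤ d, e i ≠ 0 ∧ actW S M (E (r + i)) (e i) = e i) ∧
    (∀ i ≤ d, ∀ y, actW S M B (actW S M (E (r + i)) y) = θ (r + i) • actW S M (E (r + i)) y) ∧
    (∀ i ≤ d, ∀ j ≤ d, (i + 1 < j ∨ j + 1 < i) → ∀ y,
      actW S M (E (r + i)) (actW S M C (actW S M (E (r + j)) y)) = 0) := by
  have hle : r + d ≤ S.D := by
    by_contra hlt
    refine (hr (r + d)).2 ⟨by omega, le_refl _⟩ ?_
    rw [hEzero _ (by omega)]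
    simp [Submodule.map_zero]
  refine ⟨hle, ?_, ?_, ?_, ?_, ?_⟩
  · intro i hi j hj y hij
    apply Subtype.ext
    rw [act_apply M (hET _), act_apply M (hET _), Matrix.mulVec_mulVec,
      hidem _ _ (by omega) (by omega), if_neg (by omega), Matrix.zero_mulVec]; rfl
  · intro y
    apply Subtype.ext
    rw [Submodule.coe_sum]
    simp only [act_apply M (hET _)]
    conv_lhs => rw [← Matrix.one_mulVec (y : X → ℂ), ← hsum, Matrix.sum_mulVec]
    symm
    have : ∑ i ∈ Finset.range (d + 1), E (r + i) *ᵥ (y : X → ℂ) =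
        ∑ i ∈ Finset.Ico r (r + d + 1), E i *ᵥ (y : X → ℂ) := by
      rw [Finset.sum_Ico_eq_sum_range]
      congr 2
      omega
    rw [this]
    refine Finset.sum_subset ?_ ?_
    · intro k hk; simp at hk ⊢; omega
    · intro k _ hk
      have h0 : M.W.map (E k).mulVecLin = ⊥ := by
        by_contra hne
        have := (hr k).1 hne
        simp at hk; omega
      have : (E k).mulVecLin y ∈ M.W.map (E k).mulVecLin := ⟨y, y.2, rfl⟩
      rw [h0, Submodule.mem_bot] at this
      exact this
  · have : ∀ i, ∃ e : M.W, i ≤ d → e ≠ 0 ∧ actW S M (E (r + i)) e = e := by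
      intro i
      by_cases hi : i ≤ d
      · have hne := (hr (r + i)).2 ⟨by omega, by omega⟩
        obtain ⟨_, ⟨w, hw, rfl⟩, hw0⟩ := Submodule.exists_mem_ne_zero_of_ne_bot hne
        refine ⟨actW S M (E (r + i)) ⟨w, hw⟩, fun _ => ⟨?_, ?_⟩⟩
        · intro h
          apply hw0
          have := congrArg Subtype.val h
          rw [act_apply M (hET _)] at this
          exact this
        · apply Subtype.ext
          rw [act_apply M (hET _), act_apply M (hET _), Matrix.mulVec_mulVec,
            hidem _ _ (by omega) (by omega), if_pos rfl]
      · exact ⟨0, fun h => absurd h hi⟩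
    choose e he using this
    exact ⟨e, he⟩
  · intro i hi y
    apply Subtype.ext
    rw [act_apply M hBT, Submodule.coe_smul, act_apply M (hET _), Matrix.mulVec_mulVec,
      spec_mul hidem hspec _ (by omega), Matrix.smul_mulVec]
  · intro i hi j hj h y
    apply Subtype.ext
    rw [act_apply M (hET _), act_apply M hCT, act_apply M (hET _), Matrix.mulVec_mulVec,
      Matrix.mulVec_mulVec, htri _ _ (by omega), Matrix.zero_mulVec]; rfl

end Concrete

/-- `u_i = Σ_{h=0}^i (τ*_h(θ*_{r+i})/(φ_1 ⋯ φ_h)) τ_h` and dually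
`u*_i = Σ_{h=0}^i (τ_h(θ_{t+i})/(φ_1 ⋯ φ_h)) τ*_h`, where `φ_i` is the (nonzero)
eigenvalue of `(A - θ_{t+i-1} I)(A* - θ*_{r+i} I)` on `U_i = τ_i(A) E*_r W`. -/
theorem stmt19 (S : TSetup X) (M : TMod S) (hd : 0 < M.d) (φ : ℕ → ℂ)
    (hφ : ∀ i : ℕ, 1 ≤ i → i ≤ M.d → φ i ≠ 0 ∧
      ∀ w ∈ (M.W.map (S.Estar M.r).mulVecLin).map
          (Polynomial.aeval S.A
            (∏ h ∈ Finset.range i,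
              (Polynomial.X - Polynomial.C ((S.θ (M.t + h) : ℂ))))).mulVecLin,
        ((S.A - ((S.θ (M.t + i - 1) : ℂ)) • 1) *
          (S.Astar - ((S.θstar (M.r + i) : ℂ)) • 1)) *ᵥ w = φ i • w) :
    ∀ i ≤ M.d,
      ((pW S M i).eval ((S.θ M.t : ℂ)))⁻¹ • pW S M i =
        ∑ h ∈ Finset.range (i + 1),
          ((∏ l ∈ Finset.range h, ((S.θstar (M.r + i) : ℂ) - (S.θstar (M.r + l) : ℂ)))
              / ∏ l ∈ Finset.Icc 1 h, φ l) •
            ∏ l ∈ Finset.range h,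
              (Polynomial.X - Polynomial.C ((S.θ (M.t + l) : ℂ))) ∧
      ((pstarW S M i).eval ((S.θstar M.r : ℂ)))⁻¹ • pstarW S M i =
        ∑ h ∈ Finset.range (i + 1),
          ((∏ l ∈ Finset.range h, ((S.θ (M.t + i) : ℂ) - (S.θ (M.t + l) : ℂ)))
              / ∏ l ∈ Finset.Icc 1 h, φ l) •
            ∏ l ∈ Finset.range h,
              (Polynomial.X - Polynomial.C ((S.θstar (M.r + l) : ℂ))) := by
  
  obtain ⟨hrD, f1, f2, ⟨e, he⟩, f4, f5⟩ := family_facts M S.Estar S.Astar S.A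
    (fun i => (S.θstar i : ℂ)) M.r M.d (Estar_mem S) (Astar_mem S) (A_mem S) S.hEstarzero
    (Estar_sum S) (Estar_idem S) S.hAstarspec (Estar_tri S) M.hr
  obtain ⟨htD, g1, g2, ⟨g, hg⟩, g4, g5⟩ := family_facts M S.E S.A S.Astar
    (fun i => (S.θ i : ℂ)) M.t M.d (E_mem S) (A_mem S) (Astar_mem S) S.hEzero
    S.hEsum S.hEidem S.hAspec (E_tri S) M.ht
  obtain ⟨v, ε, H, ⟨k, hk0, hk⟩⟩ := exists_TDData M.d (actW S M S.A) (actW S M S.Astar)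
    (fun i => (S.θstar (M.r + i) : ℂ)) (fun i => actW S M (S.Estar (M.r + i))) e f1 f2
    (fun i hi => (he i hi).1) (fun i hi => (he i hi).2)
    (by
      intro i hi y
      obtain ⟨⟨b, hb⟩, hbs⟩ := finrank_le_one_iff.1 (M.hthin (M.r + i))
      have hm : ∀ w : M.W, ∃ c : ℂ, c • b = ((actW S M (S.Estar (M.r + i)) w : M.W) : X → ℂ) := by
        intro w
        obtain ⟨c, hc⟩ := hbs ⟨_, ⟨(w : X → ℂ), w.2, rfl⟩⟩
        refine ⟨c, ?_⟩
        rw [act_apply M (Estar_mem S _)]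
        exact congrArg Subtype.val hc
      obtain ⟨c, hc⟩ := hm y
      obtain ⟨c', hc'⟩ := hm (e i)
      rw [(he i hi).2] at hc'
      have hne : c' ≠ 0 := by
        rintro rfl
        apply (he i hi).1
        apply Subtype.ext
        rw [← hc', zero_smul]; rfl
      refine ⟨c / c', Subtype.ext ?_⟩
      rw [Submodule.coe_smul, ← hc, ← hc', smul_smul, div_mul_cancel₀ _ hne])
    f4 f5 (act_irr M) (aW S M) (xW S M)
    (by
      intro i hi
      rw [aW, trW, act_mul M (Estar_mem S _) (A_mem S)])
    (by
      intro i hi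
      rw [xW, if_neg (by omega), trW, act_mul M (mul_mem (mul_mem (Estar_mem S _) (A_mem S))
        (Estar_mem S _)) (A_mem S), act_mul M (mul_mem (Estar_mem S _) (A_mem S))
        (Estar_mem S _), act_mul M (Estar_mem S _) (A_mem S)]
      rfl)
  obtain ⟨w, η, Hs, -⟩ := exists_TDData M.d (actW S M S.Astar) (actW S M S.A)
    (fun i => (S.θ (M.t + i) : ℂ)) (fun i => actW S M (S.E (M.t + i))) g g1 g2
    (fun i hi => (hg i hi).1) (fun i hi => (hg i hi).2)
    (by
      intro i hi y
      have hgA : actW S M S.A (g i) = (S.θ (M.t + i) : ℂ) • g i := by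
        have := g4 i hi (g i)
        rwa [(hg i hi).2] at this
      have hne : ε 0 (g i) ≠ 0 := fun h => (hg i hi).1 (H.eigen_zero _ _ hgA h)
      refine ⟨ε 0 (actW S M (S.E (M.t + i)) y) / ε 0 (g i), ?_⟩
      rw [← sub_eq_zero]
      refine H.eigen_zero _ (S.θ (M.t + i) : ℂ) ?_ ?_
      · rw [map_sub, map_smul, hgA, g4 i hi, smul_sub, smul_comm]
      · rw [map_sub, map_smul, smul_eq_mul, div_mul_cancel₀ _ hne, sub_self])
    g4 g5 (fun U h1 h2 => act_irr M U h2 h1) (astarW S M) (xstarW S M)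
    (by
      intro i hi
      rw [astarW, trW, act_mul M (E_mem S _) (Astar_mem S)])
    (by
      intro i hi
      rw [xstarW, if_neg (by omega), trW, act_mul M (mul_mem (mul_mem (E_mem S _) (Astar_mem S))
        (E_mem S _)) (Astar_mem S), act_mul M (mul_mem (E_mem S _) (Astar_mem S))
        (E_mem S _), act_mul M (E_mem S _) (Astar_mem S)]
      rfl)
  have hp : TDData.IsRec (aW S M) (xW S M) (pW S M) := ⟨rfl, rfl, fun n => rfl⟩
  have hps : TDData.IsRec (astarW S M) (xstarW S M) (pstarW S M) := ⟨rfl, rfl, fun n => rfl⟩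
  have h1 : ∀ i ≤ M.d, ((pW S M i).eval ((S.θ (M.t + 0) : ℂ)))⁻¹ • pW S M i =
      TDData.fpoly (fun i => (S.θ (M.t + i) : ℂ)) (fun i => (S.θstar (M.r + i) : ℂ)) φ i := by
    refine H.part1 hp ?_ (fun i => (S.θ (M.t + i) : ℂ)) φ ?_ ?_
    · intro i hi j hj h
      have := S.hθstarinj (M.r + i) (M.r + j) (by omega) (by omega) (by exact_mod_cast h)
      omega
    · intro i hi
      exact (hφ (i + 1) (by omega) hi).1
    · intro i hi s hs
      have hs' : (s : X → ℂ) = (Polynomial.aeval S.A (TDData.tau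
          (fun i => (S.θ (M.t + i) : ℂ)) (i + 1))) *ᵥ ((v 0 : M.W) : X → ℂ) := by
        rw [hs, act_aeval M (A_mem S)]
      have hv : ((v 0 : M.W) : X → ℂ) = (S.Estar M.r).mulVecLin ((v 0 : M.W) : X → ℂ) := by
        have h0 := (he 0 (by omega)).2
        have : actW S M (S.Estar (M.r + 0)) (v 0) = v 0 := by
          rw [hk, map_smul, h0]
        have h2 := congrArg Subtype.val this
        rw [act_apply M (Estar_mem S _)] at h2
        exact h2.symm
      have key := (hφ (i + 1) (by omega) hi).2 (s : X → ℂ)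
        ⟨((v 0 : M.W) : X → ℂ), ⟨((v 0 : M.W) : X → ℂ), (v 0).2, hv.symm⟩, hs'.symm⟩
      apply Subtype.ext
      rw [Submodule.coe_smul, ← key]
      simp only [AddSubgroupClass.coe_sub, Submodule.coe_smul, act_apply M (A_mem S),
        act_apply M (Astar_mem S), ← Matrix.mulVec_mulVec, Matrix.sub_mulVec, Matrix.smul_mulVec,
        Matrix.one_mulVec]
      rfl
  intro i hi
  exact ⟨h1 i hi, H.part2 hp Hs hps φ h1 i hi⟩
end
end
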